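/- Let K be an algebraically closed field, S = K[x_1,…,x_r] the standard graded polynomial ring, J ⊆ S a homogeneous ideal, and A = S/J with Hilbert function h_A(t) = dim_K [A]_t. Fix an integer n and assume h_A(n) ≥ C(n+2,2) and h_A(n+1) = h_A(n)^{⟨n⟩} − 1 (almost maximal growth). Then the base locus of [J]_n in ℙ^{r−1} is a scheme of dimension either MG(h_A(n),n) − 1 or MG(h_A(n),n), where MG(k,n) = k_n − n with C(k_n,n) the leading term of the n-binomial expansion of k. -/

import Mathlib

open MvPolynomial

/-- The Hilbert function of `S/I` in degree `t`: the dimension over `K` of the image of the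
space of homogeneous polynomials of degree `t` in the quotient `S/I`. -/
noncomputable def hilb {K : Type*} [Field K] {σ : Type*} (I : Ideal (MvPolynomial σ K)) (t : ℕ) : ℕ :=
  Module.finrank K
    ((homogeneousSubmodule σ K t).map (Ideal.Quotient.mkₐ K I).toLinearMap)

/-- The ideal generated by the degree-`n` component of `I`, i.e. by all homogeneous elements of
`I` of degree `n`.  Its zero locus is the base locus of the linear system `[I]_n`. -/
noncomputable def compIdeal {K : Type*} [Field K] {σ : Type*} (I : Ideal (MvPolynomial σ K)) (n : ℕ) :
    Ideal (MvPolynomial σ K) :=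
  Ideal.span ((I : Set (MvPolynomial σ K)) ∩ (homogeneousSubmodule σ K n : Set (MvPolynomial σ K)))

/-- Macaulay's bound `k^{⟨i⟩}`: if `k = C(k_i,i) + C(k_{i-1},i-1) + ⋯ + C(k_j,j)` is the
`i`-binomial expansion of `k`, then `macaulayUp i k = C(k_i+1,i+1) + ⋯ + C(k_j+1,j+1)`. -/
def macaulayUp : ℕ → ℕ → ℕ
  | 0, _ => 0
  | i + 1, k =>
    if k = 0 then 0
    else
      Nat.choose (Nat.findGreatest (fun b => Nat.choose b (i + 1) ≤ k) (k + i + 1) + 1) (i + 2) +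
        macaulayUp i
          (k - Nat.choose (Nat.findGreatest (fun b => Nat.choose b (i + 1) ≤ k) (k + i + 1)) (i + 1))

/-- The MG-dimension `MG(k,n) = k_n - n`, where `C(k_n,n)` is the leading term of the
`n`-binomial expansion of `k` (so `k_n` is the largest `b` with `C(b,n) ≤ k`). -/
def MGdim (k n : ℕ) : ℕ :=
  Nat.findGreatest (fun b => Nat.choose b n ≤ k) (k + n) - n

namespace AMG
open Nat

def dn : ℕ → ℕ → ℕ
  | 0, x => x
  | i + 1, k =>
    if k = 0 then 0
    else
      Nat.choose (Nat.findGreatest (fun b => Nat.choose b (i + 1) ≤ k) (k + i + 1) - 1) (i + 1) +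
        dn i
          (k - Nat.choose (Nat.findGreatest (fun b => Nat.choose b (i + 1) ≤ k) (k + i + 1)) (i + 1))

lemma pas (k n : ℕ) : Nat.choose (k+1) (n+1) = Nat.choose k n + Nat.choose k (n+1) := Nat.choose_succ_succ _ _

lemma choose_big (n x : ℕ) : x < Nat.choose (x + n + 1) (n + 1) := by
  induction n with
  | zero => simp
  | succ n ih =>
    have h : Nat.choose (x + (n+1) + 1) (n+1+1) = Nat.choose (x + n + 1) (n+1) + Nat.choose (x + n + 1) (n+1+1) := by
      rw [show x + (n+1) + 1 = (x+n+1)+1 by ring, Nat.choose_succ_succ]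
    omega

lemma fg_eq {n k y : ℕ} (hk : n + 1 ≤ k) (hy : y < Nat.choose k n) :
    Nat.findGreatest (fun b => Nat.choose b (n + 1) ≤ Nat.choose k (n+1) + y)
      (Nat.choose k (n+1) + y + n + 1) = k := by
  set x := Nat.choose k (n+1) + y with hx
  have hlt : x < Nat.choose (k+1) (n+1) := by rw [pas]; omega
  have hmono : ∀ b, Nat.choose b (n+1) ≤ x → b ≤ k := by
    intro b hb
    by_contra h
    have := Nat.choose_le_choose (n+1) (show k+1 ≤ b by omega)
    omega
  have hkb : k ≤ x + n + 1 := by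
    by_contra h
    have h1 := Nat.choose_le_choose (n+1) (show x+n+1 ≤ k by omega)
    have := choose_big n x
    omega
  apply le_antisymm
  · apply hmono
    exact Nat.findGreatest_spec (P := fun b => Nat.choose b (n + 1) ≤ x) hkb (by show _ ≤ x; omega)
  · exact Nat.le_findGreatest hkb (by show _ ≤ x; omega)

lemma decomp (n x : ℕ) (hx : 1 ≤ x) : ∃ k y, n + 1 ≤ k ∧ y < Nat.choose k n ∧ x = Nat.choose k (n+1) + y := by
  have hP := Nat.findGreatest_spec (P := fun b => Nat.choose b (n + 1) ≤ x) (m := n+1) (n := x+n+1) (by omega) (by simpa using hx)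
  set k := Nat.findGreatest (fun b => Nat.choose b (n + 1) ≤ x) (x+n+1) with hk
  have h1 : n+1 ≤ k := Nat.le_findGreatest (by omega) (by simpa using hx)
  have h2 : x < Nat.choose (k+1) (n+1) := by
    by_cases h : k + 1 ≤ x + n + 1
    · have := Nat.findGreatest_is_greatest (P := fun b => Nat.choose b (n + 1) ≤ x) (show k < k+1 by omega) h
      simpa using this
    · have := Nat.choose_le_choose (n+1) (show x+n+1 ≤ k+1 by omega)
      have := choose_big n x
      omega
  rw [pas] at h2
  refine ⟨k, x - Nat.choose k (n+1), h1, ?_, ?_⟩ <;> omega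

lemma choose_pos' {n k : ℕ} (hk : n ≤ k) : 1 ≤ Nat.choose k n := Nat.choose_pos hk

lemma up_spec {n k y : ℕ} (hk : n + 1 ≤ k) (hy : y < Nat.choose k n) :
    macaulayUp (n+1) (Nat.choose k (n+1) + y) = Nat.choose (k+1) (n+2) + macaulayUp n y := by
  have := choose_pos' hk
  rw [macaulayUp, if_neg (by omega), fg_eq hk hy]
  simp

lemma dn_spec {n k y : ℕ} (hk : n + 1 ≤ k) (hy : y < Nat.choose k n) :
    dn (n+1) (Nat.choose k (n+1) + y) = Nat.choose (k-1) (n+1) + dn n y := by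
  have := choose_pos' hk
  rw [dn, if_neg (by omega), fg_eq hk hy]
  simp

lemma up_zero (n : ℕ) : macaulayUp n 0 = 0 := by cases n <;> simp [macaulayUp]
lemma dn_zero (n : ℕ) : dn n 0 = 0 := by cases n <;> simp [dn]

lemma up_choose {n k : ℕ} (hk : n + 1 ≤ k) : macaulayUp (n+1) (Nat.choose k (n+1)) = Nat.choose (k+1) (n+2) := by
  have := up_spec hk (choose_pos' (show n ≤ k by omega))
  simpa [up_zero] using this

lemma dn_choose {n k : ℕ} (hk : n ≤ k) (_hk' : 1 ≤ k) : dn n (Nat.choose k n) = Nat.choose (k-1) n := by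
  cases n with
  | zero => simp [dn]
  | succ n =>
    have := dn_spec hk (choose_pos' (show n ≤ k by omega))
    simpa [dn_zero] using this

lemma dn_spec' {n k y : ℕ} (hk : n + 1 ≤ k) (hy : y ≤ Nat.choose k n) :
    dn (n+1) (Nat.choose k (n+1) + y) = Nat.choose (k-1) (n+1) + dn n y := by
  rcases hy.lt_or_eq with h | h
  · exact dn_spec hk h
  · subst h
    obtain ⟨j, rfl⟩ : ∃ j, k = j+1 := ⟨k-1, by omega⟩
    rw [dn_choose (by omega) (by omega), add_comm (Nat.choose (j+1) (n+1)), ← pas,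
      dn_choose (by omega) (by omega)]
    simp only [Nat.add_sub_cancel]
    rw [pas]; omega

lemma dn_lt {n k y : ℕ} (hk : n + 1 ≤ k) (hy : y < Nat.choose k n) : dn n y < Nat.choose (k-1) n := by
  induction n generalizing k y with
  | zero => simp at hy; subst hy; simp [dn]
  | succ n ih =>
    rcases Nat.eq_zero_or_pos y with h | h
    · subst h; rw [dn_zero]; exact Nat.choose_pos (by omega)
    · obtain ⟨j, z, hj, hz, rfl⟩ := decomp n y h
      rw [dn_spec hj hz]
      have h1 := ih hj hz
      obtain ⟨i, rfl⟩ : ∃ i, j = i+1 := ⟨j-1, by omega⟩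
      have : i + 1 < k := by
        by_contra h'
        have := Nat.choose_le_choose (n+1) (show k ≤ i+1 by omega)
        omega
      have h2 := Nat.choose_le_choose (n+1) (show i+1 ≤ k-1 by omega)
      rw [pas] at h2
      simp only [Nat.add_sub_cancel] at *
      omega

lemma up_dn (n x : ℕ) : macaulayUp (n+1) x = x + macaulayUp (n+1) (dn (n+1) x) := by
  induction n generalizing x with
  | zero =>
    rcases Nat.eq_zero_or_pos x with h | h
    · subst h; simp [dn_zero, up_zero]
    · obtain ⟨k, y, hk, hy, rfl⟩ := decomp 0 x h
      simp at hy; subst hy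
      rw [up_spec hk (by simp), dn_spec hk (by simp)]
      simp [dn, macaulayUp.eq_1]
      rcases Nat.lt_or_ge 1 k with h1 | h1
      · have := up_choose (n := 0) (k := k-1) (by omega)
        simp at this
        rw [this, show k - 1 + 1 = k by omega, Nat.choose_succ_succ]; simp
      · have : k = 1 := by omega
        subst this; simp [up_zero]
  | succ n ih =>
    rcases Nat.eq_zero_or_pos x with h | h
    · subst h; simp [dn_zero, up_zero]
    · obtain ⟨k, y, hk, hy, rfl⟩ := decomp (n+1) x h
      have hd := dn_lt hk hy
      rw [up_spec hk hy, dn_spec hk hy]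
      obtain ⟨j, rfl⟩ : ∃ j, k = j+1 := ⟨k-1, by omega⟩
      simp only [Nat.add_sub_cancel] at *
      rcases Nat.lt_or_ge (n+1) j with h1 | h1
      · rw [up_spec (by omega) hd, ih y, Nat.choose_succ_succ (j+1)]; ring
      · have : j = n+1 := by omega
        subst this
        simp at hd
        rw [hd, ih y, hd]; simp [up_zero]

lemma up_lt_succ (n x : ℕ) : macaulayUp (n+1) x < macaulayUp (n+1) (x+1) := by
  induction n generalizing x with
  | zero =>
    rcases Nat.eq_zero_or_pos x with h | h
    · subst h
      have := up_choose (n := 0) (k := 1) (by omega)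
      simp at this
      rw [up_zero, this]; simp
    · have h1 := up_choose (n := 0) (k := x) (by omega)
      have h2 := up_choose (n := 0) (k := x+1) (by omega)
      simp at h1 h2
      rw [h1, h2, Nat.choose_succ_succ (x+1)]; simp
  | succ n ih =>
    rcases Nat.eq_zero_or_pos x with h | h
    · subst h
      have := up_choose (n := n+1) (k := n+2) (by omega)
      simp at this
      rw [up_zero, zero_add, this]; simp
    · obtain ⟨k, y, hk, hy, rfl⟩ := decomp (n+1) x h
      rw [up_spec hk hy]
      have h0 := ih y
      rcases Nat.lt_or_ge (y+1) (Nat.choose k (n+1)) with h1 | h1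
      · rw [add_assoc (Nat.choose k (n+1+1)), up_spec hk h1]; omega
      · have h2 : y + 1 = Nat.choose k (n+1) := by omega
        have h3 : Nat.choose k (n+1+1) + y + 1 = Nat.choose (k+1) (n+1+1) := by
          rw [Nat.choose_succ_succ k (n+1)]; simp only [Nat.succ_eq_add_one]; omega
        rw [h3, up_choose (by omega), Nat.choose_succ_succ (k+1)]
        rw [h2, up_choose (by omega)] at h0
        simp only [Nat.succ_eq_add_one] at *
        have e1 : n + 1 + 2 = n + 2 + 1 := by ring
        rw [show n+1+1 = n+2 by ring] at *
        rw [show n+1+2 = n+2+1 by ring] at *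
        omega

lemma up_strictMono (n : ℕ) : StrictMono (macaulayUp (n+1)) := strictMono_nat_of_lt_succ (up_lt_succ n)

lemma dn_succ (n x : ℕ) : dn n x ≤ dn n (x+1) ∧ dn n (x+1) ≤ dn n x + 1 := by
  induction n generalizing x with
  | zero => simp [dn]
  | succ n ih =>
    rcases Nat.eq_zero_or_pos x with h | h
    · subst h
      have := dn_choose (n := n+1) (k := n+1) le_rfl (by omega)
      simp at this
      rw [dn_zero, zero_add, this]; simp
    · obtain ⟨k, y, hk, hy, rfl⟩ := decomp n x h
      rw [dn_spec hk hy, add_assoc, dn_spec' hk (by omega)]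
      have := ih y
      omega

lemma dn_mono (n : ℕ) : Monotone (dn n) := monotone_nat_of_le_succ (fun x => (dn_succ n x).1)

lemma dn_lip (n a b : ℕ) (h : a ≤ b) : dn n b + a ≤ dn n a + b := by
  induction b, h using Nat.le_induction with
  | base => omega
  | succ b hb ih => have := (dn_succ n b).2; omega

lemma dn_one (x : ℕ) : dn 1 x = x - 1 := by
  rcases Nat.eq_zero_or_pos x with h | h
  · subst h; simp [dn_zero]
  · have := dn_choose (n := 1) (k := x) (by omega) (by omega)
    simpa using this

lemma dn_le (n x : ℕ) : dn n x ≤ x := by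
  have := dn_lip n 0 x (by omega); rw [dn_zero] at this; omega

lemma dn_lt_self (n x : ℕ) (hx : 1 ≤ x) : dn (n+1) x < x := by
  have := dn_lip (n+1) 1 x hx
  have h := dn_choose (n := n+1) (k := n+1) le_rfl (by omega)
  simp at h
  omega

lemma green_num0 (n a : ℕ) :
    dn (n+1) (dn (n+1) a + 1) + dn n (a - (dn (n+1) a + 1)) < dn (n+1) a + 1 := by
  induction n generalizing a with
  | zero =>
    rw [dn_one, dn_one]; simp [dn]; omega
  | succ n ih =>
    rcases Nat.eq_zero_or_pos a with h | h
    · subst h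
      simp only [dn_zero, zero_add]
      have := dn_lt_self (n+1) 1 le_rfl
      simp [dn_zero]; omega
    obtain ⟨k, y, hk, hy, rfl⟩ := decomp (n+1) a h
    have hd := dn_lt hk hy
    rw [dn_spec hk hy]
    obtain ⟨j, rfl⟩ : ∃ j, k = j+1 := ⟨k-1, by omega⟩
    simp only [Nat.add_sub_cancel] at *
    have hpas : Nat.choose (j+1) (n+1+1) = Nat.choose j (n+1) + Nat.choose j (n+1+1) := Nat.choose_succ_succ _ _
    have hpas2 : Nat.choose (j+1) (n+1) = Nat.choose j n + Nat.choose j (n+1) := Nat.choose_succ_succ _ _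
    rcases Nat.lt_or_ge (n+1) j with hj | hj
    · -- j ≥ n+2
      obtain ⟨i, rfl⟩ : ∃ i, j = i+1 := ⟨j-1, by omega⟩
      have hp3 : Nat.choose (i+1) (n+1+1) = Nat.choose i (n+1) + Nat.choose i (n+1+1) := Nat.choose_succ_succ _ _
      have e1 : dn (n+1+1) (Nat.choose (i+1) (n+1+1) + (dn (n+1) y + 1)) = Nat.choose i (n+1+1) + dn (n+1) (dn (n+1) y + 1) := by
        rw [dn_spec' (by omega) (by omega)]; simp
      rw [add_assoc (Nat.choose (i+1) (n+1+1)), e1]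
      rcases Nat.eq_zero_or_pos y with h | h
      · subst h
        simp only [dn_zero, zero_add, add_zero]
        have e2 : Nat.choose (i+1+1) (n+1+1) - (Nat.choose (i+1) (n+1+1) + 1) = Nat.choose (i+1) (n+1) - 1 := by omega
        rw [e2]
        have h1 := dn_lt_self n 1 le_rfl
        have h2 : dn (n+1) (Nat.choose (i+1) (n+1) - 1) ≤ Nat.choose i (n+1) := by
          have := dn_mono (n+1) (show Nat.choose (i+1) (n+1) - 1 ≤ Nat.choose (i+1) (n+1) by omega)
          rw [dn_choose (by omega) (by omega)] at this
          simpa using this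
        omega
      · have h1 := dn_lt_self n y h
        have e2 : Nat.choose (i+1+1) (n+1+1) + y - (Nat.choose (i+1) (n+1+1) + (dn (n+1) y + 1))
          = Nat.choose (i+1) (n+1) + (y - (dn (n+1) y + 1)) := by omega
        have h2 := dn_lip (n+1) y (Nat.choose (i+1+1) (n+1)) hy.le
        rw [dn_choose (by omega) (by omega)] at h2
        simp only [Nat.add_sub_cancel] at h2
        rw [e2, dn_spec' (by omega) (by omega)]
        simp only [Nat.add_sub_cancel]
        have := ih y
        omega
    · have : j = n+1 := by omega
      subst this
      have hd' : dn (n+1) y = 0 := by simpa using hd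
      have h0 := dn_lt_self (n+1) 1 le_rfl
      have h1 : dn (n+1) (1 + y - 1) = 0 := by simpa using hd'
      simp only [hd', Nat.choose_self, Nat.choose_succ_self, zero_add]
      omega

lemma green_num (n a b : ℕ) (h : b ≤ dn (n+1) b + dn n (a-b)) : b ≤ dn (n+1) a := by
  by_contra hc
  have h0 := green_num0 n a
  have h1 := dn_lip (n+1) _ _ (show dn (n+1) a + 1 ≤ b by omega)
  have h2 := dn_mono n (show a - b ≤ a - (dn (n+1) a + 1) by omega)
  omega

lemma up_small {n x : ℕ} (h : x ≤ n + 1) : macaulayUp (n+1) x = x := by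
  have hd := dn_lt (n := n+1) (k := n+2) (y := x) (by omega) (by simp [Nat.choose_succ_self_right]; omega)
  simp at hd
  rw [up_dn, hd, up_zero]; rfl

/-- mid-range recursion -/
lemma dn_mid {n c : ℕ} (h : c < Nat.choose (n+2) 2) : dn (n+1) (n + 2 + c) = 1 + dn n c := by
  have e : Nat.choose (n+2) 2 = Nat.choose (n+2) n := by rw [← Nat.choose_symm_of_eq_add]; omega
  have := dn_spec (n := n) (k := n+2) (y := c) (by omega) (by omega)
  simpa [Nat.choose_succ_self_right] using this

lemma ch2 (n : ℕ) : Nat.choose (n+1) 2 = n + Nat.choose n 2 := by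
  rw [Nat.choose_succ_succ]; simp

lemma dn_small {n x : ℕ} (h : x ≤ n + 1) : dn (n+1) x = 0 := by
  have hd := dn_lt (n := n+1) (k := n+2) (y := x) (by omega) (by simp [Nat.choose_succ_self_right]; omega)
  simpa using hd

lemma dn_pos {n x : ℕ} (h : n + 2 ≤ x) : 1 ≤ dn (n+1) x := by
  have := dn_mono (n+1) h
  have h1 := dn_choose (n := n+1) (k := n+2) (by omega) (by omega)
  have h2 : Nat.choose (n+2) (n+1) = n + 2 := Nat.choose_succ_self_right (n+1)
  rw [h2] at h1
  simp at h1
  omega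

lemma dn_mid_claim (n c : ℕ) (h : c < Nat.choose (n+3) 2) :
    (c - dn (n+1) c < Nat.choose (n+2) 2 ∧ dn (n+1) c ≤ dn n (c - dn (n+1) c) ∧ dn n (c - dn (n+1) c) ≤ dn (n+1) c + 1 )
    ∨ (c - dn (n+1) c = Nat.choose (n+2) 2 ∧ (dn (n+1) c = n ∨ dn (n+1) c = n + 1)) := by
  induction n generalizing c with
  | zero =>
    have : c < 3 := by simpa using h
    rw [dn_one]
    interval_cases c <;> simp [dn]
  | succ n ih =>
    rcases Nat.lt_or_ge c (n+3) with h1 | h1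
    · left
      rw [dn_small (by omega)]
      have e1 : Nat.choose (n+1+2) 2 = n + 2 + Nat.choose (n+2) 2 := ch2 (n+2)
      have e2 : Nat.choose (n+2) 2 = n + 1 + Nat.choose (n+1) 2 := ch2 (n+1)
      simp only [Nat.sub_zero]
      refine ⟨by omega, by omega, ?_⟩
      have := dn_mono (n+1) (show c ≤ n + 2 by omega)
      have h1 := dn_choose (n := n+1) (k := n+2) (by omega) (by omega)
      have h2 : Nat.choose (n+2) (n+1) = n + 2 := Nat.choose_succ_self_right (n+1)
      rw [h2] at h1
      simp at h1
      omega
    · obtain ⟨d, rfl⟩ : ∃ d, c = n + 3 + d := ⟨c - (n+3), by omega⟩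
      have e1 := ch2 (n+3)
      have e2 := ch2 (n+2)
      have hd : d < Nat.choose (n+3) 2 := by
        rw [show n + 1 + 3 = n+3+1 by ring] at h; omega
      have hdm := dn_mid (n := n+1) hd
      rw [show n + 1 + 2 = n+3 by ring] at hdm
      rw [hdm]
      have hle := dn_le (n+1) d
      have e3 : n + 3 + d - (1 + dn (n+1) d) = n + 2 + (d - dn (n+1) d) := by omega
      rw [e3]
      rw [show n + 1 + 2 = n+3 by ring, e2]
      rcases ih d hd with h2 | h2
      · left
        rw [dn_mid h2.1]
        omega
      · right
        omega

end AMG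

namespace AMG
open MvPolynomial Module

section LA
variable {K E F : Type*} [Field K] [AddCommGroup E] [Module K E] [AddCommGroup F] [Module K F]

lemma finrank_map_add (f : E →ₗ[K] F) (A : Submodule K E) [FiniteDimensional K A] :
    finrank K (A.map f) + finrank K (LinearMap.ker f ⊓ A : Submodule K E) = finrank K A := by
  have h := LinearMap.finrank_range_add_finrank_ker (f.domRestrict A)
  rw [LinearMap.range_domRestrict] at h
  have : finrank K (LinearMap.ker (f.domRestrict A)) = finrank K (LinearMap.ker f ⊓ A : Submodule K E) := by
    rw [LinearMap.ker_domRestrict, inf_comm, ← Submodule.map_comap_subtype]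
    exact (LinearEquiv.finrank_eq (Submodule.equivMapOfInjective _ A.injective_subtype _))
  omega

lemma finrank_sup_map (T : E →ₗ[K] F) (A : Submodule K E) (W : Submodule K F) [FiniteDimensional K A]
    [FiniteDimensional K W] :
    finrank K (W ⊔ A.map T : Submodule K F) + finrank K (W.comap T ⊓ A : Submodule K E)
      = finrank K W + finrank K A := by
  have h1 := finrank_map_add (W.mkQ ∘ₗ T) A
  have h2 := finrank_map_add W.mkQ (W ⊔ A.map T)
  rw [LinearMap.ker_comp, Submodule.ker_mkQ, Submodule.map_comp] at h1
  rw [Submodule.ker_mkQ, inf_eq_left.mpr le_sup_left, Submodule.map_sup] at h2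
  have h3 : W.map W.mkQ = ⊥ := by
    exact Submodule.mkQ_map_self W
  rw [h3, bot_sup_eq] at h2
  omega

lemma exists_dual_family {ι : Type*} [Fintype ι] [DecidableEq ι] {v : ι → F} (hv : LinearIndependent K v) :
    ∃ φ : ι → (F →ₗ[K] K), ∀ i j, φ i (v j) = if i = j then 1 else 0 := by
  have b := Basis.sumExtend hv
  let B := Basis.span hv
  obtain ⟨g, hg⟩ := LinearMap.exists_leftInverse_of_injective (Submodule.span K (Set.range v)).subtype
    (Submodule.ker_subtype _)
  refine ⟨fun i => B.coord i ∘ₗ g, fun i j => ?_⟩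
  have h1 : v j = (Submodule.span K (Set.range v)).subtype (B j) := by simp [B, Basis.span_apply]
  have h2 : g (v j) = B j := by
    rw [h1]; exact LinearMap.congr_fun hg (B j)
  simp [h2, Finsupp.single_apply, eq_comm]

lemma rank_line [FiniteDimensional K E] (A B : E →ₗ[K] F) (q : ℕ) (hq : q ≤ finrank K (LinearMap.range A)) :
    {t : K | ¬ q ≤ finrank K (LinearMap.range (A + t • B))}.Finite := by
  classical
  obtain ⟨b⟩ : Nonempty (Basis (Fin (finrank K (LinearMap.range A))) K (LinearMap.range A)) := ⟨finBasis K _⟩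
  have he : ∀ i, ∃ e : E, A e = b i := fun i => (b i).2
  choose e he using he
  have hli : LinearIndependent K (fun i => A (e i)) := by
    simp only [he]
    exact b.linearIndependent.map' (LinearMap.range A).subtype (Submodule.ker_subtype _)
  obtain ⟨φ, hφ⟩ := exists_dual_family hli
  let P : Matrix (Fin (finrank K (LinearMap.range A))) (Fin (finrank K (LinearMap.range A))) (Polynomial K) :=
    Matrix.of fun i j => Polynomial.C (φ i (A (e j))) + Polynomial.X * Polynomial.C (φ i (B (e j)))
  have hP : ∀ t, P.det.eval t = (Matrix.of fun i j => φ i ((A + t • B) (e j))).det := by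
    intro t
    rw [← Polynomial.coe_evalRingHom, RingHom.map_det]
    congr 1
    ext i j
    simp [P]; ring
  have hne : P.det ≠ 0 := by
    intro h
    have h0 := hP 0
    rw [h] at h0
    have : (Matrix.of fun i j => φ i ((A + (0:K) • B) (e j))) = 1 := by
      ext i j
      simp [hφ, Matrix.one_apply]
    rw [this] at h0
    simp at h0
  refine (Polynomial.finite_setOfPred_isRoot hne).subset ?_
  intro t ht
  simp only [Set.mem_ofPred_eq] at ht ⊢
  by_contra hroot
  apply ht
  rw [Polynomial.IsRoot, hP] at hroot
  have hli2 : LinearIndependent K (fun j => (A + t • B) (e j)) := by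
    rw [Fintype.linearIndependent_iff]
    intro g hg
    have hmv : (Matrix.of fun i j => φ i ((A + t • B) (e j))).mulVec g = 0 := by
      ext i
      have := congrArg (φ i) hg
      simp only [map_sum, map_smul, smul_eq_mul, map_zero] at this
      simp only [Matrix.mulVec, dotProduct, Matrix.of_apply, Pi.zero_apply]
      rw [← this]
      exact Finset.sum_congr rfl fun j _ => mul_comm _ _
    have := Matrix.eq_zero_of_mulVec_eq_zero hroot hmv
    intro i; rw [this]; rfl
  have hli3 : LinearIndependent K (fun j => (⟨(A + t • B) (e j), ⟨_, rfl⟩⟩ : LinearMap.range (A + t • B))) := by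
    apply LinearIndependent.of_comp (LinearMap.range (A + t • B)).subtype
    exact hli2
  have := hli3.fintype_card_le_finrank
  simp at this
  omega

def LineOpen (K : Type*) {E : Type*} [Field K] [AddCommGroup E] [Module K E] (U : Set E) : Prop :=
  ∀ x ∈ U, ∀ y : E, {t : K | x + t • y ∉ U}.Finite

lemma LineOpen.inter {U V : Set E} (hU : LineOpen K U) (hV : LineOpen K V) : LineOpen K (U ∩ V) := by
  intro x hx y
  refine ((hU x hx.1 y).union (hV x hx.2 y)).subset ?_
  intro t ht
  simp only [Set.mem_ofPred_eq, Set.mem_inter_iff, Set.mem_union] at *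
  tauto

lemma LineOpen.inter_nonempty [Infinite K] {U V : Set E} (hU : LineOpen K U) (hV : LineOpen K V)
    (h1 : U.Nonempty) (h2 : V.Nonempty) : (U ∩ V).Nonempty := by
  obtain ⟨x, hx⟩ := h1
  obtain ⟨y, hy⟩ := h2
  have f1 := hU x hx (y - x)
  have f2 := hV y hy (x - y)
  have f3 : {t : K | x + t • (y - x) ∉ V}.Finite := by
    refine (f2.image (fun t => 1 - t)).subset ?_
    intro t ht
    refine ⟨1 - t, ?_, by simp⟩
    simp only [Set.mem_ofPred_eq] at *
    convert ht using 2
    simp only [sub_smul, smul_sub, one_smul]; abel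
  obtain ⟨t, ht⟩ := (f1.union f3).infinite_compl.nonempty
  simp only [Set.mem_compl_iff, Set.mem_union, Set.mem_ofPred_eq, not_or, not_not] at ht
  exact ⟨_, ht⟩

lemma LineOpen.image {U : Set E} (hU : LineOpen K U) (f : E →ₗ[K] F) (hf : Function.Surjective f) :
    LineOpen K (f '' U) := by
  rintro _ ⟨x, hx, rfl⟩ y
  obtain ⟨y, rfl⟩ := hf y
  refine (hU x hx y).subset ?_
  intro t ht h
  exact ht ⟨_, h, by simp⟩

lemma LineOpen.preimage {U : Set F} (hU : LineOpen K U) (f : E →ₗ[K] F) (c : F) :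
    LineOpen K {x | f x + c ∈ U} := by
  intro x hx y
  refine (hU _ hx (f y)).subset ?_
  intro t ht h
  apply ht
  simp only [Set.mem_ofPred_eq, map_add, map_smul] at *
  convert h using 1; abel

end LA
end AMG

namespace AMG
open MvPolynomial Module

section GR
variable {K : Type*} [Field K] {r : ℕ}

abbrev Sg (K : Type*) [Field K] (r n : ℕ) : Submodule K (MvPolynomial (Fin r) K) :=
  homogeneousSubmodule (Fin r) K n

instance fdSg (n : ℕ) : FiniteDimensional K (Sg K r n) :=
  Module.Finite.iff_fg.mpr (homogeneousSubmodule_fg _ _ n)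

lemma Sg_pow (n : ℕ) : Sg K r n = (Sg K r 1) ^ n := (homogeneousSubmodule_one_pow _ n).symm

lemma Sg_mul (a b : ℕ) : Sg K r a * Sg K r b = Sg K r (a + b) := by
  rw [Sg_pow a, Sg_pow b, ← pow_add, ← Sg_pow]

lemma fdle {n : ℕ} {W : Submodule K (MvPolynomial (Fin r) K)} (h : W ≤ Sg K r n) : FiniteDimensional K W :=
  Submodule.finiteDimensional_of_le h

noncomputable def cd (n : ℕ) (W : Submodule K (MvPolynomial (Fin r) K)) : ℕ :=
  finrank K (Sg K r n) - finrank K W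

variable {n : ℕ} {W W' : Submodule K (MvPolynomial (Fin r) K)}

lemma cd_add (h : W ≤ Sg K r n) : cd n W + finrank K W = finrank K (Sg K r n) := by
  have := Submodule.finrank_mono h
  unfold cd; omega

lemma cd_mono (h : W ≤ W') (h' : W' ≤ Sg K r n) : cd n W' ≤ cd n W := by
  have := fdle h'
  have := Submodule.finrank_mono h
  unfold cd; omega

lemma eq_of_cd (h : W ≤ W') (h' : W' ≤ Sg K r n) (hc : cd n W ≤ cd n W') : W = W' := by
  have := fdle h'
  have h1 := cd_add h'
  have h2 := cd_add (h.trans h')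
  exact Submodule.eq_of_le_of_finrank_le h (by omega)

lemma cd_lt (h : W < W') (h' : W' ≤ Sg K r n) : cd n W' < cd n W := by
  by_contra hc
  exact h.ne (eq_of_cd h.le h' (by omega))

@[simp] lemma cd_self : cd n (Sg K r n) = 0 := by simp [cd]

lemma cd_zero (h : W ≤ Sg K r n) (h0 : cd n W = 0) : W = Sg K r n :=
  eq_of_cd h le_rfl (by simp [h0])

/-- multiplication by a form -/
noncomputable abbrev ml (f : MvPolynomial (Fin r) K) : MvPolynomial (Fin r) K →ₗ[K] MvPolynomial (Fin r) K :=
  LinearMap.mulLeft K f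

lemma ml_mul (f : MvPolynomial (Fin r) K) (A B : Submodule K (MvPolynomial (Fin r) K)) :
    (A.map (ml f)) * B = (A * B).map (ml f) := by
  apply le_antisymm
  · rw [Submodule.mul_le]
    rintro _ ⟨a, ha, rfl⟩ b hb
    exact ⟨a * b, Submodule.mul_mem_mul ha hb, by simp [mul_assoc]⟩
  · rw [Submodule.map_le_iff_le_comap, Submodule.mul_le]
    intro a ha b hb
    simp only [Submodule.mem_comap, LinearMap.mulLeft_apply, ← mul_assoc]
    exact Submodule.mul_mem_mul ⟨a, ha, rfl⟩ hb

lemma map_ml_le {m : ℕ} (f : Sg K r 1) {A : Submodule K (MvPolynomial (Fin r) K)} (hA : A ≤ Sg K r m) :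
    A.map (ml (f : MvPolynomial (Fin r) K)) ≤ Sg K r (m+1) := by
  rintro _ ⟨a, ha, rfl⟩
  rw [add_comm, ← Sg_mul]
  exact Submodule.mul_mem_mul f.2 (hA ha)

noncomputable def sec (n : ℕ) (W : Submodule K (MvPolynomial (Fin r) K)) (f : Sg K r 1) :
    Submodule K (MvPolynomial (Fin r) K) := W ⊔ (Sg K r n).map (ml f)

noncomputable def col (n : ℕ) (W : Submodule K (MvPolynomial (Fin r) K)) (f : Sg K r 1) :
    Submodule K (MvPolynomial (Fin r) K) := W.comap (ml f) ⊓ Sg K r n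

/-- next degree -/
noncomputable def nx (W : Submodule K (MvPolynomial (Fin r) K)) :
    Submodule K (MvPolynomial (Fin r) K) := W * Sg K r 1

lemma nx_le (h : W ≤ Sg K r n) : nx W ≤ Sg K r (n+1) := by
  rw [← Sg_mul]; exact mul_le_mul_left h _

lemma nx_mono (h : W ≤ W') : nx W ≤ nx W' := mul_le_mul_left h _

lemma nx_Sg (n : ℕ) : nx (Sg K r n) = Sg K r (n+1) := Sg_mul _ _

lemma sec_le (h : W ≤ Sg K r (n+1)) (f : Sg K r 1) : sec n W f ≤ Sg K r (n+1) :=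
  sup_le h (map_ml_le f le_rfl)

lemma le_sec (f : Sg K r 1) : W ≤ sec n W f := le_sup_left

lemma col_le (f : Sg K r 1) : col n W f ≤ Sg K r n := inf_le_right

lemma nx_sec (f : Sg K r 1) : nx (sec n W f) = sec (n+1) (nx W) f := by
  unfold nx sec
  rw [Submodule.sup_mul, ml_mul, Sg_mul]

lemma le_col_nx (h : W ≤ Sg K r n) (f : Sg K r 1) : W ≤ col n (nx W) f := by
  intro w hw
  refine ⟨?_, h hw⟩
  change (f : MvPolynomial (Fin r) K) * w ∈ nx W
  rw [mul_comm]
  exact Submodule.mul_mem_mul hw f.2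

lemma nx_col_le (f : Sg K r 1) : nx (col n W f) ≤ col (n+1) (nx W) f := by
  unfold nx
  rw [Submodule.mul_le]
  rintro a ⟨ha, ha'⟩ b hb
  refine ⟨?_, ?_⟩
  · change (f : MvPolynomial (Fin r) K) * (a * b) ∈ W * Sg K r 1
    rw [← mul_assoc]
    exact Submodule.mul_mem_mul ha hb
  · have := Submodule.mul_mem_mul ha' hb
    rwa [Sg_mul] at this

lemma sec_mono (h : W ≤ W') (f : Sg K r 1) : sec n W f ≤ sec n W' f := sup_le_sup_right h _

lemma cd_split (h : W ≤ Sg K r (n+1)) (f : Sg K r 1) :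
    cd (n+1) W = cd n (col n W f) + cd (n+1) (sec n W f) := by
  have := fdle h
  have h1 := finrank_sup_map (ml (f : MvPolynomial (Fin r) K)) (Sg K r n) W
  have h2 := cd_add h
  have h3 := cd_add (col_le (n := n) (W := W) f)
  have h4 := cd_add (sec_le h f)
  unfold col at *
  unfold sec at *
  omega

lemma sec_col_le (f g : Sg K r 1) : sec n (col (n+1) W g) f ≤ col (n+1) (sec (n+1) W f) g := by
  apply sup_le
  · exact inf_le_inf_right _ (Submodule.comap_mono le_sup_left)
  · rintro _ ⟨a, ha, rfl⟩
    refine ⟨?_, map_ml_le f le_rfl ⟨a, ha, rfl⟩⟩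
    apply Submodule.mem_sup_right
    refine ⟨g * a, ?_, ?_⟩
    · have := Submodule.mul_mem_mul g.2 ha
      rwa [Sg_mul, add_comm] at this
    · simp only [LinearMap.mulLeft_apply]; ring

lemma sec_zero : sec n W 0 = W := by
  unfold sec
  rw [sup_eq_left]
  rintro _ ⟨a, ha, rfl⟩
  simp

lemma open2 (h : W ≤ Sg K r (n+1)) (q : ℕ) :
    LineOpen K {p : Sg K r 1 × Sg K r 1 | cd (n+1) (sec n (sec n W p.1) p.2) ≤ q} := by
  have := fdle h
  let i0 : (W × Sg K r n × Sg K r n) →ₗ[K] MvPolynomial (Fin r) K := W.subtype ∘ₗ LinearMap.fst K _ _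
  let i1 : (W × Sg K r n × Sg K r n) →ₗ[K] MvPolynomial (Fin r) K :=
    (Sg K r n).subtype ∘ₗ LinearMap.fst K _ _ ∘ₗ LinearMap.snd K _ _
  let i2 : (W × Sg K r n × Sg K r n) →ₗ[K] MvPolynomial (Fin r) K :=
    (Sg K r n).subtype ∘ₗ LinearMap.snd K _ _ ∘ₗ LinearMap.snd K _ _
  let T : (Sg K r 1 × Sg K r 1) → ((W × Sg K r n × Sg K r n) →ₗ[K] MvPolynomial (Fin r) K) :=
    fun p => i0 + ml (p.1 : MvPolynomial (Fin r) K) ∘ₗ i1 + ml (p.2 : MvPolynomial (Fin r) K) ∘ₗ i2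
  have hT : ∀ p, LinearMap.range (T p) = sec n (sec n W p.1) p.2 := by
    intro p
    apply le_antisymm
    · rintro _ ⟨⟨w, a, b⟩, rfl⟩
      simp only [T, i0, i1, i2, LinearMap.add_apply, LinearMap.comp_apply]
      refine Submodule.add_mem_sup (Submodule.add_mem_sup w.2 ⟨a, a.2, rfl⟩) ⟨b, b.2, rfl⟩
    · refine sup_le (sup_le ?_ ?_) ?_
      · intro w hw
        exact ⟨(⟨w, hw⟩, 0, 0), by simp [T, i0, i1, i2]⟩
      · rintro _ ⟨a, ha, rfl⟩
        exact ⟨(0, ⟨a, ha⟩, 0), by simp [T, i0, i1, i2]⟩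
      · rintro _ ⟨a, ha, rfl⟩
        exact ⟨(0, 0, ⟨a, ha⟩), by simp [T, i0, i1, i2]⟩
  intro x hx y
  have hq : ∀ p : Sg K r 1 × Sg K r 1, cd (n+1) (sec n (sec n W p.1) p.2) ≤ q ↔
      finrank K (Sg K r (n+1)) - q ≤ finrank K (LinearMap.range (T p)) := by
    intro p
    have := cd_add (sec_le (sec_le h p.1) p.2)
    rw [hT]; omega
  have := rank_line (T x) (ml (y.1 : MvPolynomial (Fin r) K) ∘ₗ i1 + ml (y.2 : MvPolynomial (Fin r) K) ∘ₗ i2)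
    (finrank K (Sg K r (n+1)) - q) ((hq x).1 hx)
  refine this.subset ?_
  intro t ht
  simp only [Set.mem_ofPred_eq] at *
  rw [hq] at ht
  have hTT : T (x + t • y) = T x + t • (ml (y.1 : MvPolynomial (Fin r) K) ∘ₗ i1 + ml (y.2 : MvPolynomial (Fin r) K) ∘ₗ i2) := by
    refine LinearMap.ext fun v => ?_
    simp only [T, LinearMap.add_apply, LinearMap.comp_apply, LinearMap.smul_apply, LinearMap.mulLeft_apply,
      Prod.fst_add, Prod.snd_add, Prod.smul_fst, Prod.smul_snd, Submodule.coe_add, Submodule.coe_smul, add_mul, smul_mul_assoc, smul_add]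
    abel
  rwa [hTT] at ht

lemma open1 (h : W ≤ Sg K r (n+1)) (q : ℕ) :
    LineOpen K {p : Sg K r 1 | cd (n+1) (sec n W p) ≤ q} := by
  have := (open2 h q).preimage (LinearMap.inl K (Sg K r 1) (Sg K r 1)) 0
  simpa [sec_zero] using this

lemma exists_sec_lt (h : W ≤ Sg K r (n+1)) (h0 : 1 ≤ cd (n+1) W) : ∃ f, cd (n+1) (sec n W f) < cd (n+1) W := by
  by_contra! hc
  have h1 : ∀ f, sec n W f = W := fun f => (eq_of_cd (le_sec f) (sec_le h f) (hc f)).symm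
  have : Sg K r (n+1) ≤ W := by
    rw [add_comm, ← Sg_mul, Submodule.mul_le]
    intro a ha b hb
    rw [← h1 ⟨a, ha⟩]
    exact Submodule.mem_sup_right ⟨b, hb, rfl⟩
  rw [le_antisymm h this] at h0
  simp at h0

theorem green [Infinite K] : ∀ (n a : ℕ) (W : Submodule K (MvPolynomial (Fin r) K)), W ≤ Sg K r (n+1) →
    cd (n+1) W = a → ∃ f, cd (n+1) (sec n W f) ≤ dn (n+1) a := by
  intro n
  induction n with
  | zero =>
    intro a W h ha
    rw [dn_one]
    rcases Nat.eq_zero_or_pos a with h0 | h0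
    · refine ⟨0, ?_⟩
      rw [sec_zero]; omega
    · obtain ⟨f, hf⟩ := exists_sec_lt h (by omega)
      exact ⟨f, by omega⟩
  | succ n ihn =>
    intro a
    induction a using Nat.strong_induction_on with
    | _ a iha =>
    intro W h ha
    rcases Nat.eq_zero_or_pos a with h0 | h0
    · refine ⟨0, ?_⟩
      rw [sec_zero]; omega
    obtain ⟨f0, hf0⟩ : ∃ f0, ∀ f, cd (n+1+1) (sec (n+1) W f0) ≤ cd (n+1+1) (sec (n+1) W f) := by
      refine ⟨Function.argmin (fun f => cd (n+1+1) (sec (n+1) W f)), fun f => Function.argmin_le (fun f => cd (n+1+1) (sec (n+1) W f)) f⟩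
    obtain ⟨f1, hf1⟩ := exists_sec_lt h (by omega)
    have hb := hf0 f1
    obtain ⟨f2, hf2⟩ := iha _ (by omega) (sec (n+1) W f0) (sec_le h f0) rfl
    generalize hbb : cd (n+1+1) (sec (n+1) W f0) = b at *
    have hU1 := open1 h b
    have hU2 := open2 h (dn (n+1+1) b)
    have hU2' := hU2.image (LinearMap.snd K (Sg K r 1) (Sg K r 1)) LinearMap.snd_surjective
    obtain ⟨g, hg1, hg2⟩ := hU1.inter_nonempty hU2' ⟨f0, hbb.le⟩ ⟨f2, (f0, f2), hf2, rfl⟩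
    obtain ⟨⟨f3, g'⟩, hf3, rfl⟩ := hg2
    simp only [LinearMap.snd_apply] at *
    have hg1' : cd (n+1+1) (sec (n+1) W g') = b := le_antisymm hg1 (hf0 g')
    have hc : cd (n+1) (col (n+1) W g') = a - b := by
      have := cd_split h g'
      omega
    obtain ⟨f4, hf4⟩ := ihn (a-b) (col (n+1) W g') (col_le g') hc
    have hU3 := open1 (col_le (n := n+1) (W := W) g') (dn (n+1) (a-b))
    have hU4 : LineOpen K {f : Sg K r 1 | cd (n+1+1) (sec (n+1) (sec (n+1) W f) g') ≤ dn (n+1+1) b} := by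
      have := hU2.preimage (LinearMap.inl K (Sg K r 1) (Sg K r 1)) (0, g')
      simpa using this
    obtain ⟨f, hfa, hfb⟩ := hU3.inter_nonempty hU4 ⟨f4, hf4⟩ ⟨f3, hf3⟩
    simp only [Set.mem_ofPred_eq] at hfa hfb
    have e1 := cd_split (sec_le h f) g'
    have e2 := cd_mono (sec_col_le (n := n) (W := W) f g') (col_le g')
    have e3 := hf0 f
    refine ⟨f0, ?_⟩
    rw [hbb]
    exact green_num _ _ _ (by omega)

theorem macaulay [Infinite K] (n : ℕ) (W : Submodule K (MvPolynomial (Fin r) K)) (h : W ≤ Sg K r (n+1)) :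
    cd (n+1+1) (nx W) ≤ macaulayUp (n+1) (cd (n+1) W) := by
  induction hc : cd (n+1) W using Nat.strong_induction_on generalizing W with
  | _ c ih =>
  rcases Nat.eq_zero_or_pos c with h0 | h0
  · rw [cd_zero h (by omega), nx_Sg]; simp
  obtain ⟨f, hf⟩ := green n c W h hc
  have h1 := cd_split (nx_le h) f
  have h2 := cd_mono (le_col_nx h f) (col_le f)
  rw [← nx_sec] at h1
  have h3 := ih _ (lt_of_le_of_lt hf (dn_lt_self n c h0)) _ (sec_le h f) rfl
  have h4 := (up_strictMono n).monotone hf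
  rw [up_dn]
  omega

end GR
end AMG

namespace AMG
open MvPolynomial Module

section KD
variable {K : Type*} [Field K] {r : ℕ} {n : ℕ} {W W' : Submodule K (MvPolynomial (Fin r) K)}

def Dle (d : ℕ) (W : Submodule K (MvPolynomial (Fin r) K)) : Prop :=
  ringKrullDim (MvPolynomial (Fin r) K ⧸ Ideal.span (W : Set (MvPolynomial (Fin r) K))) ≤ (d : WithBot ℕ∞)

lemma dim_anti {R : Type*} [CommRing R] {I J : Ideal R} (h : I ≤ J) : ringKrullDim (R ⧸ J) ≤ ringKrullDim (R ⧸ I) :=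
  ringKrullDim_le_of_surjective (Ideal.Quotient.factor h) (Ideal.Quotient.factor_surjective h)

lemma Dle.mono {d : ℕ} (h : W ≤ W') (hd : Dle d W) : Dle d W' :=
  (dim_anti (Ideal.span_mono h)).trans hd

lemma Dle.mono_d {d e : ℕ} (h : d ≤ e) (hd : Dle d W) : Dle e W :=
  le_trans hd (by exact_mod_cast h)

lemma Dle.of_nx {d : ℕ} (hd : Dle d (nx W)) : Dle d W := by
  refine (dim_anti ?_).trans hd
  rw [Ideal.span_le]
  have : nx W ≤ (Ideal.span (W : Set (MvPolynomial (Fin r) K))).restrictScalars K := by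
    unfold nx
    rw [Submodule.mul_le]
    intro a ha b hb
    exact Ideal.mul_mem_right _ _ (Ideal.subset_span ha)
  exact this

lemma comp_mul {a : ℕ} (j : ℕ) {u : MvPolynomial (Fin r) K} (hu : u ∈ Sg K r a) (g : MvPolynomial (Fin r) K) :
    homogeneousComponent (a + j) (u * g) = u * homogeneousComponent j g := by
  let _ : GradedAlgebra (homogeneousSubmodule (Fin r) K) := MvPolynomial.gradedAlgebra
  have := DirectSum.coe_decompose_mul_add_of_left_mem (homogeneousSubmodule (Fin r) K) (j := j) (b := g) hu
  have e : ∀ (f : MvPolynomial (Fin r) K) (i : ℕ),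
      (DirectSum.decompose (homogeneousSubmodule (Fin r) K) f i : MvPolynomial (Fin r) K) = homogeneousComponent i f :=
    fun f i => decomposition.decompose'_apply f i
  rwa [e, e] at this

lemma span_deg {a : ℕ} {U : Submodule K (MvPolynomial (Fin r) K)} (hU : U ≤ Sg K r a) (j : ℕ)
    {f : MvPolynomial (Fin r) K} (hf : f ∈ Ideal.span (U : Set (MvPolynomial (Fin r) K))) :
    homogeneousComponent (a + j) f ∈ U * Sg K r j := by
  suffices h : ∀ g, homogeneousComponent (a + j) (f * g) ∈ U * Sg K r j by simpa using h 1
  induction hf using Submodule.span_induction with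
  | mem x hx =>
    intro g
    rw [comp_mul j (hU hx)]
    exact Submodule.mul_mem_mul hx (homogeneousComponent_mem _ _)
  | zero => intro g; simp
  | add x y _ _ hx hy => intro g; rw [add_mul, map_add]; exact add_mem (hx g) (hy g)
  | smul a x _ hx => intro g; rw [smul_eq_mul, mul_comm a x, mul_assoc]; exact hx _

lemma span_hom {a : ℕ} {U : Submodule K (MvPolynomial (Fin r) K)} (hU : U ≤ Sg K r a) 
    {f : MvPolynomial (Fin r) K} (hf : f ∈ Ideal.span (U : Set (MvPolynomial (Fin r) K))) (t : ℕ) :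
    homogeneousComponent t f ∈ Ideal.span (U : Set (MvPolynomial (Fin r) K)) := by
  let _ : GradedAlgebra (homogeneousSubmodule (Fin r) K) := MvPolynomial.gradedAlgebra
  exact homogeneousComponent_mem_of_mem (Ideal.homogeneous_span _ _ fun x hx => ⟨a, hU hx⟩) hf t

/-- the irrelevant ideal -/
noncomputable def irr (K : Type*) [Field K] (r : ℕ) : Ideal (MvPolynomial (Fin r) K) :=
  RingHom.ker (constantCoeff (R := K) (σ := Fin r))

instance irr_max : (irr K r).IsMaximal :=
  RingHom.ker_isMaximal_of_surjective _ (fun x => ⟨C x, by simp⟩)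

lemma irr_le_span : irr K r ≤ Ideal.span (Set.range X) := by
  intro f hf
  unfold irr at hf
  rw [← Set.image_univ, MvPolynomial.mem_ideal_span_X_image]
  intro m hm
  by_contra! hc
  have : m = 0 := by ext i; simpa using hc i
  subst this
  rw [RingHom.mem_ker] at hf
  exact (MvPolynomial.mem_support_iff.mp hm) hf

lemma Sg_le_irr (n : ℕ) (f : MvPolynomial (Fin r) K) (hf : f ∈ Sg K r (n+1)) : f ∈ irr K r := by
  unfold irr
  rw [RingHom.mem_ker]
  exact MvPolynomial.IsHomogeneous.coeff_eq_zero hf (by simp)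

lemma span_le_irr (h : W ≤ Sg K r (n+1)) : Ideal.span (W : Set (MvPolynomial (Fin r) K)) ≤ irr K r := by
  rw [Ideal.span_le]
  exact fun w hw => Sg_le_irr n w (h hw)

lemma irr_le_of_X {P : Ideal (MvPolynomial (Fin r) K)} (h : ∀ i, X i ∈ P) : irr K r ≤ P := by
  refine irr_le_span.trans ?_
  rw [Ideal.span_le]
  rintro _ ⟨i, rfl⟩
  exact h i

/-- dimension at most zero: all big forms are in the ideal -/
lemma fat_of_Dle (h : W ≤ Sg K r (n+1)) (h0 : Dle 0 W) :
    ∃ k, ∀ t, k ≤ t → ∀ f ∈ Sg K r t, f ∈ Ideal.span (W : Set (MvPolynomial (Fin r) K)) := by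
  classical
  let _ : GradedAlgebra (homogeneousSubmodule (Fin r) K) := MvPolynomial.gradedAlgebra
  have hhom : (Ideal.span (W : Set (MvPolynomial (Fin r) K))).IsHomogeneous (homogeneousSubmodule (Fin r) K) :=
    Ideal.homogeneous_span _ _ fun x hx => ⟨n+1, h hx⟩
  have key : irr K r ≤ (Ideal.span (W : Set (MvPolynomial (Fin r) K))).radical := by
    apply irr_le_of_X
    intro i
    by_contra hi
    rw [Ideal.radical_eq_sInf, Ideal.mem_sInf] at hi
    push Not at hi
    obtain ⟨P, ⟨hWP, hP⟩, hiP⟩ := hi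
    let Q := (P.homogeneousCore (homogeneousSubmodule (Fin r) K))
    have hQ : Q.toIdeal.IsPrime := hP.homogeneousCore
    have hWQ : Ideal.span (W : Set (MvPolynomial (Fin r) K)) ≤ Q.toIdeal := by
      rw [← hhom.toIdeal_homogeneousCore_eq_self]
      exact Ideal.homogeneousCore_mono _ hWP
    have hQP : Q.toIdeal ≤ P := Ideal.toIdeal_homogeneousCore_le _ _
    have hQm : Q.toIdeal ≤ irr K r := by
      intro f hf
      have h1 := homogeneousComponent_mem_of_mem Q.isHomogeneous hf 0
      rw [homogeneousComponent_zero] at h1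
      by_contra hne
      have : IsUnit (C (coeff 0 f) : MvPolynomial (Fin r) K) := by
        apply IsUnit.map
        rw [isUnit_iff_ne_zero]
        intro h0
        exact hne (by unfold irr; rw [RingHom.mem_ker]; exact h0)
      exact hQ.ne_top (Ideal.eq_top_of_isUnit_mem _ h1 this)
    unfold Dle at h0
    rw [ringKrullDim_quotient, Nat.cast_zero, Order.krullDim_nonpos_iff_forall_isMax] at h0
    have h2 := h0 ⟨⟨Q.toIdeal, hQ⟩, hWQ⟩
    have h3 := @h2 ⟨⟨irr K r, irr_max.isPrime⟩, span_le_irr h⟩ hQm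
    have h4 : irr K r ≤ Q.toIdeal := h3
    apply hiP
    apply hQP
    apply h4
    exact Sg_le_irr 0 _ (isHomogeneous_X _ _)
  have hfg : (irr K r).FG := (isNoetherianRing_iff_ideal_fg _).mp inferInstance _
  obtain ⟨k, hk⟩ := Ideal.exists_pow_le_of_le_radical_of_fg key hfg
  refine ⟨k, fun t ht f hf => ?_⟩
  apply hk
  apply Ideal.pow_le_pow_right ht
  have hf' : f ∈ (Sg K r 1) ^ t := by rw [← Sg_pow]; exact hf
  have : ∀ t, (Sg K r 1) ^ t ≤ ((irr K r) ^ t).restrictScalars K := by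
    intro t
    induction t with
    | zero => intro x _; simp
    | succ t ih =>
      rw [pow_succ, Submodule.mul_le]
      intro a ha b hb
      rw [Submodule.restrictScalars_mem, pow_succ]
      exact Ideal.mul_mem_mul (ih ha) (Sg_le_irr 0 _ hb)
  exact this t hf'

lemma not_Dle_of_pow (h : W ≤ Sg K r (n+1)) (f : MvPolynomial (Fin r) K) (hf : f ∈ Sg K r 1)
    (hk : ∀ k, f ^ k ∉ Ideal.span (W : Set (MvPolynomial (Fin r) K))) : ¬ Dle 0 W := by
  intro h0
  obtain ⟨k, hk'⟩ := fat_of_Dle h h0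
  refine hk k (hk' k le_rfl _ ?_)
  rw [Sg_pow]
  exact Submodule.pow_mem_pow _ hf k

lemma avoid {E : Type*} [AddCommGroup E] [Module K E] [Infinite K] {Q : Set (Submodule K E)} (hQ : Q.Finite)
    (h : ∀ q ∈ Q, q ≠ ⊤) : LineOpen K {x | ∀ q ∈ Q, x ∉ q} ∧ {x | ∀ q ∈ Q, x ∉ q}.Nonempty := by
  induction Q, hQ using Set.Finite.induction_on with
  | empty => exact ⟨fun x hx y => by simp, ⟨0, by simp⟩⟩
  | @insert q Q hq hQ ih =>
    obtain ⟨h1, h2⟩ := ih fun q hq => h q (Set.mem_insert_of_mem _ hq)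
    have e : {x | ∀ p ∈ insert q Q, x ∉ p} = {x | x ∉ q} ∩ {x | ∀ p ∈ Q, x ∉ p} := by
      ext x; simp
    have o : LineOpen K {x : E | x ∉ q} := by
      intro x hx y
      apply Set.Subsingleton.finite
      intro t ht s hs
      simp only [Set.mem_ofPred_eq, not_not] at *
      by_contra hne
      have h3 := sub_mem ht hs
      have h4 : (t - s) • y ∈ q := by
        convert h3 using 1
        rw [sub_smul]; abel
      have h5 : y ∈ q := (q.smul_mem_iff (sub_ne_zero.mpr hne)).mp h4
      exact hx (by simpa using sub_mem ht (q.smul_mem t h5))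
    rw [e]
    refine ⟨o.inter h1, o.inter_nonempty h1 ?_ h2⟩
    have := h q (Set.mem_insert _ _)
    by_contra hc
    apply this
    rw [eq_top_iff]
    intro x _
    by_contra hx
    exact hc ⟨x, hx⟩

lemma cut [Infinite K] {d : ℕ} (hd : Dle (d+1) W) {U : Set (Sg K r 1)}
    (hU : LineOpen K U) (hne : U.Nonempty) : ∃ f ∈ U, Dle d (sec n W f) := by
  classical
  set I := Ideal.span (W : Set (MvPolynomial (Fin r) K)) with hI
  let φ : Ideal (MvPolynomial (Fin r) K) → Submodule K (Sg K r 1) := fun P =>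
    (P.restrictScalars K).comap (Sg K r 1).subtype
  have hfin : (φ '' {P | P ∈ I.minimalPrimes ∧ ¬ irr K r ≤ P}).Finite :=
    ((Ideal.finite_minimalPrimes_of_isNoetherianRing _ I).subset (fun P hP => hP.1)).image _
  obtain ⟨o1, o2⟩ := avoid hfin (by
    rintro _ ⟨P, ⟨hP, hP'⟩, rfl⟩ htop
    apply hP'
    apply irr_le_of_X
    intro i
    have : (⟨X i, isHomogeneous_X _ _⟩ : Sg K r 1) ∈ φ P := by rw [htop]; trivial
    exact this)
  obtain ⟨f, hfU, hf⟩ := hU.inter_nonempty o1 hne o2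
  refine ⟨f, hfU, ?_⟩
  unfold Dle at *
  rw [ringKrullDim_quotient] at *
  unfold Order.krullDim
  apply iSup_le
  intro p
  have hsub : PrimeSpectrum.zeroLocus (R := MvPolynomial (Fin r) K) (Ideal.span (sec n W f : Set (MvPolynomial (Fin r) K)))
      ⊆ PrimeSpectrum.zeroLocus I := by
    intro P hP
    exact le_trans (Ideal.span_mono (le_sec f)) hP
  have hP0 := p.head.2
  have hP0I : I ≤ p.head.1.asIdeal := hsub hP0
  have hfP : (f : MvPolynomial (Fin r) K) ∈ p.head.1.asIdeal := by
    by_contra hfP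
    have h1 : ∀ g ∈ Sg K r n, g ∈ p.head.1.asIdeal := by
      intro g hg
      have : (f : MvPolynomial (Fin r) K) * g ∈ p.head.1.asIdeal :=
        hP0 (Ideal.subset_span (Submodule.mem_sup_right ⟨g, hg, rfl⟩))
      exact (p.head.1.isPrime.mem_or_mem this).resolve_left hfP
    have h2 : (f : MvPolynomial (Fin r) K) ^ n ∈ p.head.1.asIdeal := by
      apply h1
      rw [Sg_pow]
      exact Submodule.pow_mem_pow _ f.2 n
    exact hfP (p.head.1.isPrime.mem_of_pow_mem _ h2)
  obtain ⟨Q, hQ, hQP⟩ := Ideal.exists_minimalPrimes_le hP0I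
  rcases eq_or_lt_of_le hQP with heq | hlt
  · have hirr : irr K r ≤ Q := by
      by_contra hc
      exact hf _ ⟨Q, ⟨hQ, hc⟩, rfl⟩ (by rw [heq]; exact hfP)
    have hlen : p.length = 0 := by
      by_contra hlen
      have : NeZero p.length := ⟨hlen⟩
      have h1 : p.head < p.last := p.strictMono (by
        rw [Fin.lt_def]; simp; omega)
      have h2 : p.head.1.asIdeal < p.last.1.asIdeal := h1
      have h3 : irr K r = p.last.1.asIdeal :=
        irr_max.eq_of_le p.last.1.isPrime.ne_top (hirr.trans (heq.le.trans h2.le))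
      rw [← h3] at h2
      exact absurd h2 (not_lt_of_ge (hirr.trans heq.le))
    rw [hlen]; simp
  · let p1 : LTSeries (PrimeSpectrum.zeroLocus (R := MvPolynomial (Fin r) K) I) :=
      p.map (Set.inclusion hsub) (fun a b h => h)
    let p2 := p1.cons ⟨⟨Q, hQ.1.1⟩, hQ.1.2⟩ (by exact hlt)
    have h1 := Order.LTSeries.length_le_krullDim p2
    have h2 := h1.trans hd
    have h3 : p2.length = p.length + 1 := RelSeries.cons_length _ _ _
    rw [h3] at h2
    have h4 : p.length + 1 ≤ d + 1 := by exact_mod_cast h2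
    have : p.length ≤ d := by omega
    exact_mod_cast this

end KD
end AMG

namespace AMG
open MvPolynomial Module

section FF
variable {K : Type*} [Field K] {r : ℕ} {n : ℕ} {W W' : Submodule K (MvPolynomial (Fin r) K)}

lemma dim_le_of_finite {A B : Type*} [CommRing A] [CommRing B] [Algebra A B] [Module.Finite A B] :
    ringKrullDim B ≤ ringKrullDim A := by
  have : Algebra.IsIntegral A B := inferInstance
  refine Order.krullDim_le_of_strictMono (fun p => PrimeSpectrum.comap (algebraMap A B) p) ?_
  intro p q hpq
  exact Ideal.IsIntegral.comap_lt_comap (show p.asIdeal < q.asIdeal from hpq)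

lemma dim_le_of_forms' {e δ k : ℕ} {Q : Type*} [CommRing Q] (π : MvPolynomial (Fin r) K →+* Q)
    (hπ : Function.Surjective π)
    (I : Ideal (MvPolynomial (Fin r) K)) (hI : ∀ a ∈ I, π a = 0) (f : Fin e → MvPolynomial (Fin r) K)
    (hδ : 1 ≤ δ) (h : ∀ t, k < t → Sg K r t ≤ I.restrictScalars K ⊔ ⨆ i, (Sg K r (t - δ)).map (ml (f i))) :
    ringKrullDim Q ≤ (e : WithBot ℕ∞) := by
  classical
  let φ : MvPolynomial (Fin e) K →+* Q := π.comp (aeval f).toRingHom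
  let _ : Algebra (MvPolynomial (Fin e) K) Q := φ.toAlgebra
  have hsm : ∀ (b : MvPolynomial (Fin e) K) (x : MvPolynomial (Fin r) K),
      b • (π x) = π (aeval f b * x) := by
    intro b x
    rw [Algebra.smul_def, map_mul]; rfl
  choose s hs using fun t => (homogeneousSubmodule_fg (Fin r) K t)
  let G : Finset Q := (Finset.range (k+1)).biUnion fun t => (s t).image π
  let N : Submodule (MvPolynomial (Fin e) K) Q := Submodule.span _ (G : Set _)
  have key : ∀ t, ∀ g ∈ Sg K r t, π g ∈ N := by
    intro t
    induction t using Nat.strong_induction_on with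
    | _ t ih =>
    intro g hg
    rcases Nat.lt_or_ge k t with hk | hk
    · have hg' := h t hk hg
      rw [Submodule.mem_sup] at hg'
      obtain ⟨a, ha, b, hb, rfl⟩ := hg'
      clear hg
      rw [map_add, hI a ha, zero_add]
      induction hb using Submodule.iSup_induction' with
      | mem i x hx =>
        obtain ⟨y, hy, rfl⟩ := hx
        have := N.smul_mem (X i) (ih (t - δ) (by omega) y hy)
        rw [hsm] at this
        simpa using this
      | zero => simp
      | add x y hx hy h1 h2 => rw [map_add]; exact add_mem h1 h2
    · have hg' : g ∈ Submodule.span K (s t : Set (MvPolynomial (Fin r) K)) := by rw [hs]; exact hg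
      clear hg
      induction hg' using Submodule.span_induction with
      | mem x hx =>
        apply Submodule.subset_span
        simp only [G, Finset.coe_biUnion, Set.mem_iUnion]
        exact ⟨t, by simp; omega, by simpa using ⟨x, hx, rfl⟩⟩
      | zero => simp
      | add x y _ _ h1 h2 => rw [map_add]; exact add_mem h1 h2
      | smul c x _ h1 =>
        have := N.smul_mem (C c) h1
        rw [hsm] at this
        rw [MvPolynomial.smul_eq_C_mul]
        simpa [MvPolynomial.algebraMap_eq] using this
  have hN : N = ⊤ := by
    rw [eq_top_iff]
    intro x _
    obtain ⟨g, rfl⟩ := hπ x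
    rw [← sum_homogeneousComponent g, map_sum]
    exact sum_mem fun t _ => key t _ (homogeneousComponent_mem _ _)
  have : Module.Finite (MvPolynomial (Fin e) K) Q := ⟨⟨G, hN⟩⟩
  refine (dim_le_of_finite (A := MvPolynomial (Fin e) K)).trans ?_
  rw [MvPolynomial.ringKrullDim_of_isNoetherianRing, ringKrullDim_eq_zero_of_field]
  simp

lemma dim_le_of_forms {e δ k : ℕ} (I : Ideal (MvPolynomial (Fin r) K)) (f : Fin e → MvPolynomial (Fin r) K)
    (hδ : 1 ≤ δ) (h : ∀ t, k < t → Sg K r t ≤ I.restrictScalars K ⊔ ⨆ i, (Sg K r (t - δ)).map (ml (f i))) :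
    ringKrullDim (MvPolynomial (Fin r) K ⧸ I) ≤ (e : WithBot ℕ∞) :=
  dim_le_of_forms' (Ideal.Quotient.mk I) Ideal.Quotient.mk_surjective I
    (fun _ ha => Ideal.Quotient.eq_zero_iff_mem.mpr ha) f hδ h

lemma exists_forms (e : ℕ) : ∀ (W : Submodule K (MvPolynomial (Fin r) K)), W ≤ W' → W' ≤ Sg K r n → cd n W ≤ cd n W' + e →
    ∃ f : Fin e → MvPolynomial (Fin r) K, W' ≤ W ⊔ ⨆ i, Submodule.span K {f i} := by
  induction e with
  | zero =>
    intro W h h' hc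
    exact ⟨Fin.elim0, (eq_of_cd h h' hc).ge.trans le_sup_left⟩
  | succ e ih =>
    intro W h h' hc
    by_cases hx : W' ≤ W
    · exact ⟨fun _ => 0, hx.trans le_sup_left⟩
    · obtain ⟨x, hx', hx⟩ := SetLike.not_le_iff_exists.mp hx
      have hle : W ⊔ Submodule.span K {x} ≤ W' := sup_le h (by simpa using hx')
      have hlt : W < W ⊔ Submodule.span K {x} := lt_of_le_of_ne le_sup_left (by
        intro he
        apply hx
        rw [he]
        exact Submodule.mem_sup_right (Submodule.mem_span_singleton_self x))
      have := cd_lt hlt (hle.trans h')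
      obtain ⟨f, hf⟩ := ih _ hle h' (by omega)
      refine ⟨Fin.cons x f, hf.trans ?_⟩
      refine sup_le (sup_le le_sup_left ?_) ?_
      · exact le_sup_of_le_right (le_iSup_of_le 0 (by simp))
      · exact le_sup_of_le_right (iSup_le fun i => le_iSup_of_le i.succ (by simp))

lemma Dle_of_forms {e : ℕ} (h : W ≤ W') (h' : W' ≤ Sg K r (n+1)) (hc : cd (n+1) W ≤ cd (n+1) W' + e)
    (hd : Dle 0 W') : Dle e W := by
  obtain ⟨f, hf⟩ := exists_forms e W h h' hc
  obtain ⟨k, hk⟩ := fat_of_Dle h' hd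
  refine dim_le_of_forms (δ := n+1) (k := k+n+1) _ f (by omega) ?_
  intro t ht g hg
  obtain ⟨j, rfl⟩ : ∃ j, t = n + 1 + j := ⟨t - (n+1), by omega⟩
  have h1 := span_deg h' j (hk _ (by omega) g hg)
  rw [homogeneousComponent_eq_self hg] at h1
  have h2 : W' * Sg K r j ≤ (W ⊔ ⨆ i, Submodule.span K {f i}) * Sg K r j := mul_le_mul_left hf _
  have h3 := h2 h1
  rw [Submodule.sup_mul, Submodule.iSup_mul] at h3
  refine (show W * Sg K r j ⊔ (⨆ i, Submodule.span K {f i} * Sg K r j) ≤ _ from sup_le_sup ?_ ?_) h3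
  · rw [Submodule.mul_le]
    intro a ha b hb
    exact Ideal.mul_mem_right _ _ (Ideal.subset_span ha)
  · refine iSup_mono fun i => ?_
    rw [Submodule.mul_le]
    intro a ha b hb
    obtain ⟨c, rfl⟩ := Submodule.mem_span_singleton.mp ha
    rw [Nat.add_sub_cancel_left]
    exact ⟨c • b, Submodule.smul_mem _ _ hb, by simp⟩

lemma lin0 (h : W ≤ Sg K r 1) (hc : 1 ≤ cd 1 W) : ¬ Dle 0 W := by
  have hne : ¬ Sg K r 1 ≤ W := by
    intro h1
    rw [le_antisymm h h1, cd_self] at hc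
    omega
  obtain ⟨f, hf, hfW⟩ := SetLike.not_le_iff_exists.mp hne
  obtain ⟨φ, hφ1, hφ2⟩ := Submodule.exists_le_ker_of_notMem hfW
  have hev : ∀ g ∈ Sg K r 1, eval (fun i => φ (X i)) g = φ g := by
    intro g hg
    have hg' : g ∈ Submodule.span K (Set.range (X : Fin r → MvPolynomial (Fin r) K)) := by
      rw [← homogeneousSubmodule_one_eq_span_X]; exact hg
    induction hg' using Submodule.span_induction with
    | mem x hx => obtain ⟨i, rfl⟩ := hx; simp
    | zero => simp
    | add x y hx hy h1 h2 =>
      have e : Submodule.span K (Set.range (X : Fin r → MvPolynomial (Fin r) K)) = Sg K r 1 :=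
        (homogeneousSubmodule_one_eq_span_X ..).symm
      rw [e] at hx hy
      rw [map_add, map_add, h1 hx, h2 hy]
    | smul c x hx h1 =>
      have e : Submodule.span K (Set.range (X : Fin r → MvPolynomial (Fin r) K)) = Sg K r 1 :=
        (homogeneousSubmodule_one_eq_span_X ..).symm
      rw [e] at hx
      rw [smul_eval, h1 hx, map_smul, smul_eq_mul]
  apply not_Dle_of_pow (n := 0) h f hf
  intro k hk
  have hker : Ideal.span (W : Set (MvPolynomial (Fin r) K)) ≤ RingHom.ker (eval (fun i => φ (X i))) := by
    rw [Ideal.span_le]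
    intro w hw
    rw [SetLike.mem_coe, RingHom.mem_ker, hev w (h hw)]
    exact hφ2 hw
  have := hker hk
  rw [RingHom.mem_ker, map_pow, hev f hf] at this
  exact (pow_ne_zero k hφ1) this

lemma cd0_le : cd 0 W ≤ 1 := by
  have h : finrank K (Sg K r 0) ≤ 1 := by
    have : Sg K r 0 = Submodule.span K {1} := by
      rw [← Submodule.one_eq_span]; exact homogeneousSubmodule_zero ..
    rw [this]
    simpa using finrank_span_le_card (R := K) ({1} : Set (MvPolynomial (Fin r) K))
  unfold cd; omega

lemma lin [Infinite K] (d : ℕ) : ∀ (W : Submodule K (MvPolynomial (Fin r) K)), W ≤ Sg K r 1 → d + 1 ≤ cd 1 W → ¬ Dle d W := by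
  induction d with
  | zero => intro W h hc; exact lin0 h hc
  | succ d ih =>
    intro W h hc hd
    obtain ⟨f, -, hf⟩ := cut (n := 0) hd (U := Set.univ) (fun x hx y => by simp) ⟨0, trivial⟩
    refine ih _ (sec_le h f) ?_ hf
    have := cd_split (n := 0) h f
    have h0 : cd 0 (col 0 W f) ≤ 1 := cd0_le
    simp only [zero_add] at *
    omega

lemma exists_rho {N : Type*} [AddCommGroup N] [Module K N] (T : Fin r → Module.End K N)
    (hT : ∀ i j, T i * T j = T j * T i) : ∃ ρ : MvPolynomial (Fin r) K →ₐ[K] Module.End K N, ∀ i, ρ (X i) = T i := by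
  have hcomm : ∀ a ∈ Set.range T, ∀ b ∈ Set.range T, a * b = b * a := by
    rintro _ ⟨i, rfl⟩ _ ⟨j, rfl⟩
    exact hT i j
  let _ := Algebra.adjoinCommRingOfComm K hcomm
  let ρ0 : MvPolynomial (Fin r) K →ₐ[K] Algebra.adjoin K (Set.range T) :=
    aeval (fun i => ⟨T i, Algebra.subset_adjoin ⟨i, rfl⟩⟩)
  refine ⟨(Algebra.adjoin K (Set.range T)).val.comp ρ0, fun i => ?_⟩
  simp [ρ0]

end FF
end AMG

namespace AMG
open MvPolynomial Module

section EE
variable {K : Type*} [Field K] {r : ℕ} {n : ℕ} {W W' : Submodule K (MvPolynomial (Fin r) K)}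

lemma exists_sigma (f : Sg K r 1) (hs : sec n W f = Sg K r (n+1)) :
    ∃ σ : MvPolynomial (Fin r) K →ₗ[K] MvPolynomial (Fin r) K, ∀ g, σ g ∈ Sg K r n ∧
      homogeneousComponent (n+1) g - f * σ g ∈ W := by
  let Φ : W × Sg K r n →ₗ[K] MvPolynomial (Fin r) K :=
    W.subtype.coprod ((ml (f : MvPolynomial (Fin r) K)).comp (Sg K r n).subtype)
  have hr : LinearMap.range Φ = Sg K r (n+1) := by
    rw [← hs]
    simp only [Φ, LinearMap.range_coprod, Submodule.range_subtype, LinearMap.range_comp]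
    rfl
  obtain ⟨ψ, hψ⟩ := Φ.rangeRestrict.exists_rightInverse_of_surjective Φ.range_rangeRestrict
  have hmem : ∀ g, homogeneousComponent (n+1) g ∈ LinearMap.range Φ := by
    intro g; rw [hr]; exact homogeneousComponent_mem _ _
  let c : MvPolynomial (Fin r) K →ₗ[K] LinearMap.range Φ := (homogeneousComponent (n+1)).codRestrict _ hmem
  refine ⟨(Sg K r n).subtype.comp ((LinearMap.snd K W (Sg K r n)).comp (ψ.comp c)), fun g => ⟨?_, ?_⟩⟩
  · exact Subtype.property _
  · have h1 : Φ (ψ (c g)) = homogeneousComponent (n+1) g := by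
      have := congrArg Subtype.val (LinearMap.congr_fun hψ (c g))
      exact this
    have h2 : Φ (ψ (c g)) = ((ψ (c g)).1 : MvPolynomial (Fin r) K) + f * ((ψ (c g)).2 : MvPolynomial (Fin r) K) := by
      simp [Φ]
    rw [← h1, h2]
    simp

lemma lemE (h : W ≤ Sg K r (n+1)) (hne : W ≠ Sg K r (n+1)) (f : Sg K r 1) (hs : sec n W f = Sg K r (n+1))
    (hc : col (n+1) (nx W) f ≤ W) : ¬ Dle 0 W := by
  obtain ⟨σ, hσ⟩ := exists_sigma f hs
  have hP : ∀ y ∈ Sg K r (n+1), (f : MvPolynomial (Fin r) K) * y ∈ nx W → y ∈ W := fun y hy hfy =>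
    hc ⟨hfy, hy⟩
  have hmul : ∀ a ∈ Sg K r 1, ∀ u ∈ Sg K r n, a * u ∈ Sg K r (n+1) := by
    intro a ha u hu
    rw [add_comm n 1, ← Sg_mul]; exact Submodule.mul_mem_mul ha hu
  have hnx : ∀ a ∈ Sg K r 1, ∀ w ∈ W, a * w ∈ nx W := by
    intro a ha w hw
    rw [mul_comm]; exact Submodule.mul_mem_mul hw ha
  -- f * (a σ g) ≡ a g
  have hQ : ∀ a ∈ Sg K r 1, ∀ g, (f : MvPolynomial (Fin r) K) * (a * σ g) - a * homogeneousComponent (n+1) g ∈ nx W := by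
    intro a ha g
    have := hnx a ha _ (hσ g).2
    rw [← neg_mem_iff]
    convert this using 1; ring
  let N' : Submodule K (MvPolynomial (Fin r) K) := W.comap (homogeneousComponent (n+1))
  have hN' : ∀ y ∈ Sg K r (n+1), y ∈ N' ↔ y ∈ W := by
    intro y hy
    simp only [N', Submodule.mem_comap]
    rw [homogeneousComponent_eq_self hy]
  have hX : ∀ i, (X i : MvPolynomial (Fin r) K) ∈ Sg K r 1 := fun i => isHomogeneous_X _ _
  let τ : MvPolynomial (Fin r) K → (MvPolynomial (Fin r) K →ₗ[K] MvPolynomial (Fin r) K) := fun a => (ml a).comp σ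
  have hτ : ∀ a ∈ Sg K r 1, N' ≤ N'.comap (τ a) := by
    intro a ha w hw
    change a * σ w ∈ N'
    rw [hN' _ (hmul a ha _ (hσ w).1)]
    apply hP _ (hmul a ha _ (hσ w).1)
    have h1 := add_mem (hQ a ha w) (hnx a ha _ hw)
    simpa using h1
  let N := MvPolynomial (Fin r) K ⧸ N'
  let mk : MvPolynomial (Fin r) K →ₗ[K] N := N'.mkQ
  have hmk : ∀ y ∈ Sg K r (n+1), ∀ z ∈ Sg K r (n+1), (f : MvPolynomial (Fin r) K) * y - f * z ∈ nx W → mk y = mk z := by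
    intro y hy z hz hyz
    apply (Submodule.Quotient.eq _).mpr
    rw [hN' _ (sub_mem hy hz)]
    apply hP _ (sub_mem hy hz)
    rwa [mul_sub]
  let T : Fin r → Module.End K N := fun i => N'.mapQ N' (τ (X i)) (hτ _ (hX i))
  have hT : ∀ i g, T i (mk g) = mk (X i * σ g) := fun i g => rfl
  have hcomm : ∀ i j, T i * T j = T j * T i := by
    intro i j
    apply LinearMap.ext
    intro x
    obtain ⟨g, rfl⟩ := N'.mkQ_surjective x
    change T i (T j (mk g)) = T j (T i (mk g))
    rw [hT, hT, hT, hT]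
    have m := fun i => hmul _ (hX i) _ (hσ g).1
    have a1 := hQ (X i) (hX i) (X j * σ g)
    have a2 := hQ (X j) (hX j) (X i * σ g)
    rw [homogeneousComponent_eq_self (m _)] at a1 a2
    apply hmk _ (hmul _ (hX i) _ (hσ _).1) _ (hmul _ (hX j) _ (hσ _).1)
    convert sub_mem a1 a2 using 1
    ring
  obtain ⟨ρ, hρ⟩ := exists_rho T hcomm
  have h1 : ∀ a ∈ Sg K r 1, ∀ g, ρ a (mk g) = mk (a * σ g) := by
    intro a ha g
    have ha' : a ∈ Submodule.span K (Set.range (X : Fin r → MvPolynomial (Fin r) K)) := by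
      rw [← homogeneousSubmodule_one_eq_span_X]; exact ha
    clear ha
    induction ha' using Submodule.span_induction with
    | mem x hx => obtain ⟨i, rfl⟩ := hx; rw [hρ, hT]
    | zero => simp
    | add x y hx hy h1 h2 => rw [map_add, LinearMap.add_apply, h1, h2, add_mul, map_add]
    | smul c x hx h1 => rw [map_smul, LinearMap.smul_apply, h1, smul_mul_assoc, map_smul]
  have h2 : ∀ a ∈ Sg K r 1, ∀ u ∈ Sg K r n, ρ a (mk (f * u)) = mk (a * u) := by
    intro a ha u hu
    rw [h1 a ha]
    apply hmk _ (hmul _ ha _ (hσ _).1) _ (hmul _ ha _ hu)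
    have := hQ a ha (f * u)
    rw [homogeneousComponent_eq_self (hmul _ f.2 _ hu)] at this
    convert this using 1; ring
  have hfp : ∀ j, (f : MvPolynomial (Fin r) K) ^ j ∈ Sg K r j := by
    intro j; rw [Sg_pow]; exact Submodule.pow_mem_pow _ f.2 j
  have h3 : ∀ j i, i + j = n + 1 → ∀ g ∈ Sg K r j, ∀ u ∈ Sg K r i, ρ g (mk (f ^ j * u)) = mk (g * u) := by
    intro j
    induction j with
    | zero =>
      intro i hi g hg u hu
      have hg' : g ∈ (1 : Submodule K (MvPolynomial (Fin r) K)) := by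
        rw [← homogeneousSubmodule_zero]; exact hg
      obtain ⟨c, rfl⟩ := Submodule.mem_one.mp hg'
      rw [AlgHom.commutes, Module.algebraMap_end_apply, ← Algebra.smul_def, map_smul]
      simp
    | succ j ih =>
      intro i hi g hg u hu
      rw [add_comm j 1] at hg
      change g ∈ Sg K r _ at hg
      rw [← Sg_mul] at hg
      induction hg using Submodule.mul_induction_on' with
      | mem_mul_mem a ha b hb =>
        have m1 : (f : MvPolynomial (Fin r) K) ^ j * u ∈ Sg K r n := by
          rw [show n = j + i by omega, ← Sg_mul]; exact Submodule.mul_mem_mul (hfp j) hu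
        have m2 : a * u ∈ Sg K r (i+1) := by
          rw [add_comm i, ← Sg_mul]; exact Submodule.mul_mem_mul ha hu
        rw [mul_comm a b, map_mul, Module.End.mul_apply]
        rw [show (f : MvPolynomial (Fin r) K) ^ (j+1) * u = f * (f ^ j * u) by ring, h2 a ha _ m1]
        rw [show a * ((f : MvPolynomial (Fin r) K) ^ j * u) = f ^ j * (a * u) by ring, ih (i+1) (by omega) b hb _ m2]
        rw [mul_assoc]
      | add x hx y hy h1 h2 => rw [map_add, LinearMap.add_apply, h1, h2, add_mul, map_add]
  have h4 : ∀ g ∈ Sg K r (n+1), ρ g (mk (f ^ (n+1))) = mk g := by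
    intro g hg
    have := h3 (n+1) 0 (by omega) g hg 1 (isHomogeneous_one _ _)
    simpa using this
  have h6 : ρ f (mk (f ^ (n+1))) = mk (f ^ (n+1)) := by
    have := h2 f f.2 (f ^ n) (hfp n)
    rwa [← pow_succ'] at this
  have h7 : ∀ k, ρ (f ^ k) (mk (f ^ (n+1))) = mk (f ^ (n+1)) := by
    intro k
    induction k with
    | zero => simp
    | succ k ih => rw [pow_succ, map_mul, Module.End.mul_apply, h6, ih]
  have h8 : ∀ g ∈ Ideal.span (W : Set (MvPolynomial (Fin r) K)), ρ g (mk (f ^ (n+1))) = 0 := by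
    intro g hg
    induction hg using Submodule.span_induction with
    | mem x hx =>
      rw [h4 x (h hx)]
      exact (Submodule.Quotient.mk_eq_zero _).mpr ((hN' x (h hx)).mpr hx)
    | zero => simp
    | add x y hx hy h1 h2 => rw [map_add, LinearMap.add_apply, h1, h2, add_zero]
    | smul c x hx h1 => rw [smul_eq_mul, map_mul, Module.End.mul_apply, h1, map_zero]
  apply not_Dle_of_pow h f f.2
  intro k hk
  have h9 := h8 _ hk
  rw [h7] at h9
  apply hne
  apply le_antisymm h
  intro g hg
  rw [← hN' g hg]
  apply (Submodule.Quotient.mk_eq_zero _).mp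
  change mk g = 0
  rw [← h4 g hg, h9, map_zero]

end EE
end AMG

namespace AMG
open MvPolynomial Module

section AB
variable {K : Type*} [Field K] {r : ℕ} {n : ℕ} {W W' : Submodule K (MvPolynomial (Fin r) K)}

lemma split_nx (h : W ≤ Sg K r (n+1)) (f : Sg K r 1) :
    cd (n+1+1) (nx W) = cd (n+1) (col (n+1) (nx W) f) + cd (n+1+1) (nx (sec n W f)) ∧
    cd (n+1) (col (n+1) (nx W) f) ≤ cd (n+1) W := by
  have h1 := cd_split (nx_le h) f
  rw [← nx_sec] at h1
  exact ⟨h1, cd_mono (le_col_nx h f) (col_le f)⟩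

lemma thmA0 [Infinite K] (h : W ≤ Sg K r (n+1)) (h1 : 1 ≤ cd (n+1) W) (h2 : cd (n+1) W ≤ n+1)
    (h3 : cd (n+1) W ≤ cd (n+1+1) (nx W)) : ¬ Dle 0 W := by
  obtain ⟨f, hf⟩ := green n _ W h rfl
  rw [dn_small h2] at hf
  have hs := cd_zero (sec_le h f) (Nat.le_zero.mp hf)
  have ⟨e1, e2⟩ := split_nx h f
  rw [hs, nx_Sg, cd_self] at e1
  refine lemE h ?_ f hs (eq_of_cd (le_col_nx h f) (col_le f) (by omega)).ge
  intro he
  rw [he, cd_self] at h1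
  omega

lemma chs (n : ℕ) : Nat.choose (n+2) (n+1) = n + 2 := Nat.choose_succ_self_right (n+1)

lemma choose_le' {a b k : ℕ} (h : a ≤ b) : Nat.choose a k ≤ Nat.choose b k := Nat.choose_le_choose k h

lemma thmA [Infinite K] (n : ℕ) : ∀ (c m : ℕ) (W : Submodule K (MvPolynomial (Fin r) K)), W ≤ Sg K r (n+1) → cd (n+1) W = c →
    Nat.choose (n+1+m) (n+1) ≤ c → macaulayUp (n+1) c ≤ cd (n+1+1) (nx W) → ¬ Dle m W := by
  intro c
  induction c using Nat.strong_induction_on with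
  | _ c ih =>
  intro m W h hc hm hu hd
  rcases Nat.lt_or_ge (n+1) c with hn | hn
  · obtain ⟨m', hm', hd'⟩ : ∃ m', Nat.choose (n+1+(m'+1)) (n+1) ≤ c ∧ Dle (m'+1) W := by
      cases m with
      | zero => exact ⟨0, by have := chs n; simpa [this] using hn, hd.mono_d (by omega)⟩
      | succ m' => exact ⟨m', hm, hd⟩
    obtain ⟨f, hfU, hf⟩ := cut (n := n) hd' (open1 h (dn (n+1) c)) (green n c W h hc)
    have hfU : cd (n+1) (sec n W f) ≤ dn (n+1) c := hfU
    have ⟨e1, e2⟩ := split_nx h f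
    have e3 := macaulay n _ (sec_le h f)
    have e4 := up_dn n c
    have e5 : dn (n+1) c ≤ cd (n+1) (sec n W f) := (up_strictMono n).le_iff_le.mp (by omega)
    have e6 := dn_mono (n+1) hm'
    rw [dn_choose (by omega) (by omega)] at e6
    exact ih _ (dn_lt_self n c (by omega)) m' _ (sec_le h f) (by omega) e6 (by omega) hf
  · have h1 : 1 ≤ Nat.choose (n+1+m) (n+1) := choose_pos' (by omega)
    rcases Nat.eq_zero_or_pos m with h0 | h0
    · subst h0
      rw [up_small hn] at hu
      exact thmA0 h (by omega) (by omega) (by omega) hd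
    · have := choose_le' (k := n+1) (show n + 2 ≤ n+1+m by omega)
      rw [chs] at this
      omega

lemma stepB [Infinite K] (n : ℕ) (hB1 : ∀ (c : ℕ) (W : Submodule K (MvPolynomial (Fin r) K)), W ≤ Sg K r (n+1) → cd (n+1) W = c →
    n + 2 ≤ c → c < Nat.choose (n+3) 2 → macaulayUp (n+1) c ≤ cd (n+1+1) (nx W) + 1 → ¬ Dle 0 W) :
    ∀ (c m : ℕ) (W : Submodule K (MvPolynomial (Fin r) K)), W ≤ Sg K r (n+1) → cd (n+1) W = c →
    Nat.choose (n+1+m+1) (n+1) ≤ c → macaulayUp (n+1) c ≤ cd (n+1+1) (nx W) + 1 → ¬ Dle m W := by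
  intro c
  induction c using Nat.strong_induction_on with
  | _ c ih =>
  intro m W h hc hm hu hd
  have hch : Nat.choose (n+3) (n+1) = Nat.choose (n+3) 2 := by rw [← Nat.choose_symm_of_eq_add]; omega
  rcases Nat.lt_or_ge c (Nat.choose (n+3) 2) with hn | hn
  · rcases Nat.eq_zero_or_pos m with h0 | h0
    · subst h0
      have := chs n
      refine hB1 c W h hc ?_ hn hu hd
      rw [← this]; exact hm
    · have := choose_le' (k := n+1) (show n + 3 ≤ n+1+m+1 by omega)
      omega
  · obtain ⟨m', hm', hd'⟩ : ∃ m', Nat.choose (n+1+(m'+1)+1) (n+1) ≤ c ∧ Dle (m'+1) W := by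
      cases m with
      | zero => exact ⟨0, by rw [← hch] at hn; simpa using hn, hd.mono_d (by omega)⟩
      | succ m' => exact ⟨m', hm, hd⟩
    have hc1 : 1 ≤ c := le_trans (choose_pos' (by omega)) hm'
    obtain ⟨f, hfU, hf⟩ := cut (n := n) hd' (open1 h (dn (n+1) c)) (green n c W h hc)
    have hfU : cd (n+1) (sec n W f) ≤ dn (n+1) c := hfU
    have ⟨e1, e2⟩ := split_nx h f
    have e3 := macaulay n _ (sec_le h f)
    have e4 := up_dn n c
    have e6 := dn_mono (n+1) hm'
    rw [dn_choose (by omega) (by omega)] at e6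
    rcases hfU.eq_or_lt with he | he
    · exact ih _ (dn_lt_self n c hc1) m' _ (sec_le h f) he e6 (by omega) hf
    · have e7 := up_strictMono n he
      have e8 := up_strictMono n (show dn (n+1) c - 1 < dn (n+1) c by omega)
      have e5 : dn (n+1) c - 1 ≤ cd (n+1) (sec n W f) := (up_strictMono n).le_iff_le.mp (by omega)
      have e9 : n+1+(m'+1)+1-1 = n+1+m'+1 := by omega
      rw [e9, pas] at e6
      have e10 : 1 ≤ Nat.choose (n+1+m') n := choose_pos' (by omega)
      exact thmA n _ m' _ (sec_le h f) rfl (by omega) (by omega) hf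

lemma B1 [Infinite K] (q : ℕ) (ihB : ∀ (c m : ℕ) (W : Submodule K (MvPolynomial (Fin r) K)), W ≤ Sg K r (q+1) → cd (q+1) W = c →
    Nat.choose (q+1+m+1) (q+1) ≤ c → macaulayUp (q+1) c ≤ cd (q+1+1) (nx W) + 1 → ¬ Dle m W)
    (c : ℕ) (W : Submodule K (MvPolynomial (Fin r) K)) (h : W ≤ Sg K r (q+1+1)) (hc : cd (q+1+1) W = c)
    (hc1 : q + 3 ≤ c) (hc2 : c < Nat.choose (q+4) 2) 
    (hu : macaulayUp (q+1+1) c ≤ cd (q+1+1+1) (nx W) + 1) : ¬ Dle 0 W := by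
  intro hd
  have hs1 : 1 ≤ dn (q+1+1) c := dn_pos (n := q+1) (by omega)
  have hs2 : dn (q+1+1) c < q + 3 := by
    have hch : Nat.choose (q+4) (q+2) = Nat.choose (q+4) 2 := by rw [← Nat.choose_symm_of_eq_add]; omega
    have := dn_lt (n := q+2) (k := q+4) (y := c) (by omega) (by omega)
    have h2 : Nat.choose (q+4-1) (q+2) = q + 3 := chs (q+1)
    rw [h2] at this
    exact this
  have e4 := up_dn (q+1) c
  rw [up_small (x := dn (q+1+1) c) (by omega)] at e4
  have hclaim := dn_mid_claim (q+1) c hc2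
  obtain ⟨f, hf⟩ := green (q+1) c W h hc
  generalize hs : dn (q+1+1) c = s at *
  have ⟨e1, e2⟩ := split_nx h f
  have e3 := macaulay (q+1) _ (sec_le h f)
  rw [up_small (by omega)] at e3
  rcases Nat.eq_zero_or_pos (cd (q+1+1) (sec (q+1) W f)) with h0 | h0
  · refine lemE h ?_ f (cd_zero (sec_le h f) h0) (eq_of_cd (le_col_nx h f) (col_le f) (by omega)).ge hd
    intro he
    rw [he, cd_self] at hc
    omega
  rcases Nat.lt_or_ge (cd (q+1+1+1) (nx (sec (q+1) W f))) (cd (q+1+1) (sec (q+1) W f)) with h1 | h1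
  swap
  · exact thmA0 (sec_le h f) h0 (by omega) h1 (hd.mono (le_sec f))
  have hW : W = col (q+1+1) (nx W) f := eq_of_cd (le_col_nx h f) (col_le f) (by omega)
  have hVW : nx (col (q+1) W f) ≤ W := (nx_col_le f).trans hW.ge
  have hV : col (q+1) W f ≤ Sg K r (q+1) := col_le f
  have hcs := cd_split h f
  generalize col (q+1) W f = V at *
  have e5 := cd_mono hVW h
  have e6 := macaulay q V hV
  have e7 := up_dn q (cd (q+1) V)
  have hcs' : c - s = cd (q+1) V := by omega
  rw [hcs'] at hclaim
  have hnxV := nx_le hV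
  rcases hclaim with ⟨k1, k2, k3⟩ | ⟨k1, k2⟩
  · have hs' : dn (q+1) (cd (q+1) V) < q + 2 := by
      have hch : Nat.choose (q+3) (q+1) = Nat.choose (q+3) 2 := by rw [← Nat.choose_symm_of_eq_add]; omega
      have := dn_lt (n := q+1) (k := q+3) (y := cd (q+1) V) (by omega) (by rw [hch]; exact k1)
      have h2 : Nat.choose (q+3-1) (q+1) = q + 2 := chs q
      rw [h2] at this
      exact this
    rw [up_small (x := dn (q+1) (cd (q+1) V)) (by omega)] at e7
    have hle := dn_le (q+1) (cd (q+1) V)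
    have hd2 : q + 2 ≤ cd (q+1) V := by
      by_contra hcon
      have := dn_small (n := q) (x := cd (q+1) V) (by omega)
      omega
    rcases Nat.eq_or_lt_of_le k2 with h2 | h2
    · refine thmA q _ 0 V hV rfl (by simp; omega) (by omega) ?_
      have : nx V = W := eq_of_cd hVW h (by omega)
      rw [← this] at hd
      exact hd.of_nx
    · rcases Nat.eq_or_lt_of_le e5 with h3 | h3
      · have : nx V = W := eq_of_cd hVW h (by omega)
        rw [← this] at hd
        refine ihB _ 0 V hV rfl (le_of_eq_of_le (chs q) hd2) (by omega) hd.of_nx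
      · refine thmA q _ 1 V hV rfl (le_of_eq_of_le (chs q) hd2) (by omega) ?_
        exact (Dle_of_forms hVW h (by omega) hd).of_nx
  · have hch : Nat.choose (q+3) (q+1) = Nat.choose (q+3) 2 := by rw [← Nat.choose_symm_of_eq_add]; omega
    have hup : macaulayUp (q+1) (cd (q+1) V) = cd (q+1) V + (q + 3) := by
      rw [k1, show q + 1 + 2 = q + 3 by rfl, ← hch, up_choose (by omega), show q + 2 = q+1+1 by rfl, pas]
      have := chs (q+1)
      simp
    have k1' : cd (q+1) V = Nat.choose (q+3) (q+1) := by rw [hch]; exact k1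
    rcases Nat.lt_or_ge (cd (q+1+1) (nx V)) (cd (q+1) V + (q + 3)) with h2 | h2
    swap
    · refine thmA q _ 2 V hV rfl k1'.ge (by omega) ?_
      exact (Dle_of_forms hVW h (by omega) hd).of_nx
    rcases Nat.lt_or_ge (cd (q+1+1) (nx V)) (cd (q+1) V + (q + 2)) with h3 | h3
    swap
    · refine ihB _ 1 V hV rfl k1'.ge (by omega) ?_
      exact (Dle_of_forms hVW h (by omega) hd).of_nx
    have hWV : nx V = W := eq_of_cd hVW h (by omega)
    have hdV : Dle 0 V := by rw [← hWV] at hd; exact hd.of_nx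
    cases q with
    | zero =>
      refine lin 2 V hV ?_ (hdV.mono_d (by omega))
      have : Nat.choose 3 1 = 3 := by norm_num
      simp only [zero_add] at k1'
      omega
    | succ q =>
      obtain ⟨g, hg⟩ := green (q+1) _ V hV rfl
      rw [k1', dn_choose (by omega) (by omega)] at hg
      have hg' : cd (q+1+1) (sec (q+1) V g) ≤ q + 3 := by
        have := chs (q+1)
        have e : q + 1 + 3 - 1 = q + 1 + 2 := by omega
        rw [e, this] at hg
        omega
      have ⟨f1, f2⟩ := split_nx hV g
      have f3 := macaulay (q+1) _ (sec_le hV g)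
      rcases Nat.eq_or_lt_of_le hg' with h4 | h4
      · rcases Nat.lt_or_ge (cd (q+1+1+1) (nx (sec (q+1) V g))) (q + 3) with h5 | h5
        · have hVV : V = col (q+1+1) (nx V) g := eq_of_cd (le_col_nx hV g) (col_le g) (by omega)
          have hUV : nx (col (q+1) V g) ≤ V := (nx_col_le g).trans hVV.ge
          have hU : col (q+1) V g ≤ Sg K r (q+1) := col_le g
          have hcs2 := cd_split hV g
          generalize col (q+1) V g = U at *
          have hcU : cd (q+1) U = Nat.choose (q+3) (q+1) := by
            have a1 : Nat.choose (q+3) (q+1) = Nat.choose (q+3) 2 := by rw [← Nat.choose_symm_of_eq_add]; omega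
            have a2 := ch2 (q+3)
            have a3 : cd (q+1+1) V = Nat.choose (q+3+1) 2 := k1
            omega
          have hupU : macaulayUp (q+1) (cd (q+1) U) = cd (q+1+1) V := by
            rw [hcU, up_choose (by omega), k1']
          have g1 := cd_mono hUV hV
          have g2 := macaulay q U hU
          have : nx U = V := eq_of_cd hUV hV (by omega)
          rw [← this] at hdV
          exact thmA q _ 2 U hU rfl hcU.ge (by omega) (hdV.of_nx.mono_d (by omega))
        · refine ihB _ 0 _ (sec_le hV g) rfl ?_ ?_ (hdV.mono (le_sec g))
          · rw [h4]
            exact (chs (q+1)).le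
          · rw [h4]
            have a1 := up_choose (n := q+1) (k := q+3) (by omega)
            have a2 := chs (q+1)
            have a3 := chs (q+2)
            rw [show q + 1 + 2 = q + 3 by omega, show q + 1 + 1 = q + 2 by omega] at a2
            rw [show q + 2 + 2 = q + 3 + 1 by omega, show q + 2 + 1 = q + 1 + 2 by omega] at a3
            rw [show q + 1 + 1 = q + 2 by omega, a2, a3] at a1
            rw [show q + 1 + 1 = q + 2 by omega, a1]
            have : cd (q+2+1) (nx (sec (q+1) V g)) ≥ q + 3 := h5
            omega
      · rw [up_small (by omega)] at f3
        exact thmA0 (sec_le hV g) (by omega) (by omega) (by omega) (hdV.mono (le_sec g))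

theorem thmB [Infinite K] : ∀ (n c m : ℕ) (W : Submodule K (MvPolynomial (Fin r) K)), W ≤ Sg K r (n+1) → cd (n+1) W = c →
    Nat.choose (n+1+m+1) (n+1) ≤ c → macaulayUp (n+1) c ≤ cd (n+1+1) (nx W) + 1 → ¬ Dle m W := by
  intro n
  induction n with
  | zero => exact stepB 0 fun c W h hc h1 _ _ => lin0 h (by simp only [zero_add] at hc; omega)
  | succ q ihq => exact stepB (q+1) fun c W h hc h1 h2 h3 => B1 q ihq c W h hc (by omega) h2 h3

end AB
end AMG

namespace AMG
open MvPolynomial Module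

section FIN
variable {K : Type*} [Field K] {r : ℕ} {n : ℕ} {W W' : Submodule K (MvPolynomial (Fin r) K)}

lemma exists_lin [Infinite K] (n : ℕ) : ∀ (m : ℕ) (W : Submodule K (MvPolynomial (Fin r) K)), W ≤ Sg K r (n+1) →
    cd (n+1) W < Nat.choose (n+1+m) (n+1) →
    ∃ M : Fin m → MvPolynomial (Fin r) K, Sg K r (n+1) ≤ W ⊔ ⨆ i, (Sg K r n).map (ml (M i)) := by
  intro m
  induction m with
  | zero =>
    intro W h hc
    refine ⟨Fin.elim0, ?_⟩
    rw [cd_zero h (by simpa using hc)]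
    exact le_sup_left
  | succ m ih =>
    intro W h hc
    obtain ⟨f, hf⟩ := green n _ W h rfl
    have := dn_lt (n := n+1) (k := n+1+(m+1)) (by omega) hc
    obtain ⟨M, hM⟩ := ih _ (sec_le h f) (lt_of_le_of_lt hf this)
    refine ⟨Fin.cons f M, hM.trans ?_⟩
    refine sup_le (sup_le le_sup_left ?_) ?_
    · exact le_sup_of_le_right (le_iSup_of_le 0 (by simp))
    · exact le_sup_of_le_right (iSup_le fun i => le_iSup_of_le i.succ (by simp))

lemma upper [Infinite K] (m : ℕ) (h : W ≤ Sg K r (n+1)) (hc : cd (n+1) W < Nat.choose (n+1+m) (n+1)) : Dle m W := by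
  obtain ⟨M, hM⟩ := exists_lin n m W h hc
  refine dim_le_of_forms (δ := 1) (k := n) _ M le_rfl ?_
  intro t ht
  obtain ⟨j, rfl⟩ : ∃ j, t = n + 1 + j := ⟨t - (n+1), by omega⟩
  rw [← Sg_mul]
  refine (mul_le_mul_left hM _).trans ?_
  rw [Submodule.sup_mul, Submodule.iSup_mul]
  refine sup_le_sup ?_ ?_
  · rw [Submodule.mul_le]
    intro a ha b hb
    exact Ideal.mul_mem_right _ _ (Ideal.subset_span ha)
  · refine iSup_mono fun i => ?_
    rw [ml_mul, Sg_mul, show n + 1 + j - 1 = n + j by omega]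

lemma hilb_eq (J : Ideal (MvPolynomial (Fin r) K)) (t : ℕ) :
    hilb J t = cd t (J.restrictScalars K ⊓ Sg K r t) := by
  have h1 := finrank_map_add (Ideal.Quotient.mkₐ K J).toLinearMap (Sg K r t)
  have h2 : LinearMap.ker (Ideal.Quotient.mkₐ K J).toLinearMap = J.restrictScalars K := by
    ext x
    rw [LinearMap.mem_ker]
    exact Ideal.Quotient.eq_zero_iff_mem
  rw [h2] at h1
  unfold hilb cd
  change finrank K ((Sg K r t).map _) = _
  omega

theorem main [Infinite K] (J : Ideal (MvPolynomial (Fin r) K)) (n : ℕ)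
    (hbig : Nat.choose (n + 2) 2 ≤ hilb J n)
    (hamg : hilb J (n + 1) + 1 = macaulayUp n (hilb J n)) :
    ringKrullDim (MvPolynomial (Fin r) K ⧸ compIdeal J n) = (MGdim (hilb J n) n : WithBot ℕ∞) ∨
      ringKrullDim (MvPolynomial (Fin r) K ⧸ compIdeal J n)
        = ((MGdim (hilb J n) n + 1 : ℕ) : WithBot ℕ∞) := by
  cases n with
  | zero => simp [macaulayUp] at hamg
  | succ n =>
  set W := J.restrictScalars K ⊓ Sg K r (n+1) with hW
  have h : W ≤ Sg K r (n+1) := inf_le_right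
  have hcomp : compIdeal J (n+1) = Ideal.span (W : Set (MvPolynomial (Fin r) K)) := rfl
  rw [hcomp]
  have hc : hilb J (n+1) = cd (n+1) W := hilb_eq J (n+1)
  have hnx : nx W ≤ J.restrictScalars K ⊓ Sg K r (n+1+1) := by
    refine le_inf ?_ (nx_le h)
    unfold nx
    rw [Submodule.mul_le]
    intro a ha b hb
    exact Ideal.mul_mem_right _ _ ha.1
  have hc' : hilb J (n+1+1) ≤ cd (n+1+1) (nx W) := by
    rw [hilb_eq]; exact cd_mono hnx inf_le_right
  generalize hilb J (n+1) = c at *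
  have hch : Nat.choose (n+3) (n+1) = Nat.choose (n+3) 2 := by rw [← Nat.choose_symm_of_eq_add]; omega
  have hbig' : Nat.choose (n+3) (n+1) ≤ c := by rw [hch]; exact hbig
  have hc1 : 1 ≤ c := le_trans (choose_pos' (by omega)) hbig'
  obtain ⟨k, y, hk, hy, hx⟩ := decomp n c hc1
  have hMG : MGdim c (n+1) = k - (n+1) := by
    unfold MGdim
    have := fg_eq hk hy
    rw [← hx] at this
    rw [← this]
    rfl
  have hlt : c < Nat.choose (k+1) (n+1) := by rw [pas]; omega
  have hk3 : n + 3 ≤ k := by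
    by_contra hcon
    have := choose_le' (k := n+1) (show k + 1 ≤ n + 3 by omega)
    omega
  obtain ⟨m, rfl⟩ : ∃ m, k = n + 1 + m + 1 := ⟨k - (n+2), by omega⟩
  rw [hMG, show n + 1 + m + 1 - (n+1) = m + 1 by omega]
  have hU : Dle (m+2) W := upper (m+2) h (by rw [← hc]; exact hlt)
  have hL : ¬ Dle m W := thmB n c m W h hc.symm (by omega) (by omega)
  unfold Dle at hU hL
  generalize ringKrullDim (MvPolynomial (Fin r) K ⧸ Ideal.span (W : Set (MvPolynomial (Fin r) K))) = D at *
  induction D with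
  | bot => simp at hL
  | coe D =>
    induction D with
    | top =>
      exfalso
      have : ((⊤ : ℕ∞) : WithBot ℕ∞) ≤ ((m+2 : ℕ) : ℕ∞) := hU
      rw [WithBot.coe_le_coe] at this
      exact absurd this (by simp)
    | coe d =>
      have h1 : d ≤ m + 2 := by
        have h1 : ((d : ℕ∞) : WithBot ℕ∞) ≤ ((m+2 : ℕ) : ℕ∞) := hU
        rw [WithBot.coe_le_coe] at h1
        exact_mod_cast h1
      have h2 : ¬ d ≤ m := by
        intro hh
        apply hL
        change ((d : ℕ∞) : WithBot ℕ∞) ≤ ((m : ℕ) : ℕ∞)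
        rw [WithBot.coe_le_coe]
        exact_mod_cast hh
      have : d = m + 1 ∨ d = m + 1 + 1 := by omega
      rcases this with h | h
      · left; subst h; rfl
      · right; subst h; rfl

end FIN
end AMG

/-- **Theorem (almost maximal growth, higher-dimensional case).**
Let `K` be an algebraically closed field, `S = K[x_1,…,x_r]`, `J ⊆ S` a homogeneous ideal and
`A = S/J`.  Assume `h_A(n) ≥ C(n+2,2)` and `h_A(n+1) = h_A(n)^{⟨n⟩} - 1` (almost maximal
growth).  Then the base locus of `[J]_n` in `ℙ^{r-1}` is a scheme of dimension either
`MG(h_A(n),n) - 1` or `MG(h_A(n),n)`; equivalently, the Krull dimension of `S/⟨[J]_n⟩` is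
either `MG(h_A(n),n)` or `MG(h_A(n),n) + 1`. -/
theorem almostMaximalGrowth_baseLocus_dim_MG
    {K : Type*} [Field K] [IsAlgClosed K] {r : ℕ}
    (J : Ideal (MvPolynomial (Fin r) K))
    (hJhom : ∀ f ∈ J, ∀ t : ℕ, homogeneousComponent t f ∈ J)
    (n : ℕ)
    (hbig : Nat.choose (n + 2) 2 ≤ hilb J n)
    (hamg : hilb J (n + 1) + 1 = macaulayUp n (hilb J n)) :
    ringKrullDim (MvPolynomial (Fin r) K ⧸ compIdeal J n) = (MGdim (hilb J n) n : WithBot ℕ∞) ∨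
      ringKrullDim (MvPolynomial (Fin r) K ⧸ compIdeal J n)
        = ((MGdim (hilb J n) n + 1 : ℕ) : WithBot ℕ∞) := by
  have _ : Infinite K := IsAlgClosed.instInfinite
  exact AMG.main J n hbig hamg
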